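/- Let n ≥ 5. There is a constant C (depending only on n and η) such that for all x ∈ ℝ^{n-1}, t ∈ ℝ, and s ∈ (−1/10,1/10), the second symmetric difference of the inverse Fourier transforms of the truncated level-set measures satisfies |(σ_s^{(0)})^∨(x,t) − 2(σ_0^{(0)})^∨(x,t) + (σ_{−s}^{(0)})^∨(x,t)| ≤ C(1+|t|)^{(2−n)/2} · min((1+|t|)² s², 1). -/

import Mathlib

open MeasureTheory Real FourierTransform Filter
open scoped ENNReal RealInnerProductSpace

noncomputable section

/-- `ℝⁿ = ℝ^{n-1} × ℝ`, realized as `EuclideanSpace ℝ (Fin (m+1))` with `m = n-1`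
spatial coordinates and the last coordinate playing the role of time. -/
abbrev Spacetime (m : ℕ) := EuclideanSpace ℝ (Fin (m + 1))

namespace Wave

variable {m : ℕ}

/-- The time coordinate `τ` of a point `z = (ξ, τ)`. -/
def timeCoord (z : Spacetime m) : ℝ := z (Fin.last m)

/-- `g(ξ,τ) = |ξ|² - τ²`, written using `|ξ|² = ‖z‖² - τ²`. -/
def waveSymbol (z : Spacetime m) : ℝ := ‖z‖ ^ 2 - 2 * timeCoord z ^ 2

/-- The canonical surface measure `σ_s` on the level set `g⁻¹(s)` of
`g(ξ,τ) = |ξ|² - τ²`: the `(n-1)`-dimensional Hausdorff measure restricted to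
`g⁻¹(s)` (with the origin deleted). -/
def levelMeasure (m : ℕ) (s : ℝ) : Measure (Spacetime m) :=
  (μH[(m : ℝ)]).restrict {z | waveSymbol z = s ∧ z ≠ 0}

/-- `(σ_s^{(0)})^∨(w)`: the inverse Fourier transform of the truncated surface measure
`σ_s^{(0)} = η σ_s`, evaluated at `w = (x,t)`. -/
def sigmaCheck (η : Spacetime m → ℝ) (s : ℝ) (w : Spacetime m) : ℂ :=
  ∫ z, (η z : ℂ) * Complex.exp (2 * (π : ℂ) * Complex.I * ((⟪z, w⟫ : ℝ) : ℂ))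
    ∂(levelMeasure m s)

end Wave

open Wave

/-!
A function of `|ξ|²` is a superposition of the chirps `e^{-2πiu|ξ|²}`. Weighted by the Gaussian
`e^{-π|ξ|²}`, a chirp has an explicit inverse Fourier transform `G(x, u)`, which satisfies
`|G(x, u)| ≤ C (1 + |u|)^{-m/2}` with `m = n - 1`, uniformly in `x`. The level set of `s` consists
of the two sheets `τ = ±√(|ξ|² - s)`, on each of which the surface measure has density
`√(2|ξ|² - s) / √(|ξ|² - s)` with respect to `dξ`. Hence the transform of `η σ_s` at `(x, t)` is a
constant multiple of `∫ I(s, u, t) G(x, u) du`, where `I` is a one-dimensional oscillatory integral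
in `τ` with phase `tτ - u(τ² + s)`, and the dependence on `x` has disappeared from `I`.

Stationary phase gives `|I| ≤ C (1 + |u|)^{-1/2}`. Since the amplitude of `I` vanishes near
`τ = s = 0`, integration by parts in `τ` shows moreover that `I` decays rapidly unless `|u|` and
`|t|` are comparable. There `G` contributes `(1 + |t|)^{-m/2}`, and the integral in `u` is at most
`(1 + |t|)^{(1 - m)/2}`. A second difference in `s` costs an additional factor `(1 + |u|)² s²`.
-/

open Module (finrank)
open scoped NNReal Topology

section AreaFormula

lemma hausdorffMeasure_image_le_of_edist_le {X Y Z : Type*} [EMetricSpace Y] [MeasurableSpace Y]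
    [BorelSpace Y] [EMetricSpace Z] [MeasurableSpace Z] [BorelSpace Z] {f : X → Y} {g : X → Z}
    {K : ℝ≥0} {A : Set X} {d : ℝ} (hd : 0 ≤ d)
    (h : ∀ x ∈ A, ∀ y ∈ A, edist (f x) (f y) ≤ K * edist (g x) (g y)) :
    μH[d] (f '' A) ≤ (K : ℝ≥0∞) ^ d * μH[d] (g '' A) := by
  rcases A.eq_empty_or_nonempty with rfl | ⟨a, -⟩
  · simp
  have : Nonempty X := ⟨a⟩
  obtain ⟨r, hr⟩ : ∃ r : Z → X, ∀ z ∈ g '' A, r z ∈ A ∧ g (r z) = z :=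
    ⟨Function.invFunOn g A, fun z hz => ⟨Function.invFunOn_mem hz, Function.invFunOn_eq hz⟩⟩
  have h_lipschitz : LipschitzOnWith K (f ∘ r) (g '' A) := by
    intro x hx y hy
    simpa only [Function.comp_apply, (hr x hx).2, (hr y hy).2] using h _ (hr x hx).1 _ (hr y hy).1
  have h_image : f '' A ⊆ (f ∘ r) '' (g '' A) := by
    rintro _ ⟨x, hx, rfl⟩
    refine ⟨g x, ⟨x, hx, rfl⟩, edist_le_zero.1 ?_⟩
    obtain ⟨hrA, hgr⟩ := hr (g x) ⟨x, hx, rfl⟩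
    simpa only [Function.comp_apply, hgr, edist_self, mul_zero] using h _ hrA _ hx
  exact (measure_mono h_image).trans (h_lipschitz.hausdorffMeasure_image_le hd)

lemma measure_le_of_locally_le {X : Type*} [TopologicalSpace X] [SecondCountableTopology X]
    [MeasurableSpace X] [OpensMeasurableSpace X] {μ ν : Measure X} {A : Set X}
    (hA : MeasurableSet A)
    (h : ∀ x ∈ A, ∀ᶠ B in (𝓝 x).smallSets, MeasurableSet B → B ⊆ A → μ B ≤ ν B) :
    μ A ≤ ν A := by
  have h_nhds : ∀ x ∈ A, ∃ V, x ∈ V ∧ IsOpen V ∧ ∀ B ⊆ V, MeasurableSet B → B ⊆ A → μ B ≤ ν B := by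
    intro x hx
    obtain ⟨V, hV, hVB⟩ := eventually_smallSets.1 (h x hx)
    exact ⟨interior V, mem_interior_iff_mem_nhds.2 hV, isOpen_interior,
      fun B hB => hVB B (hB.trans interior_subset)⟩
  choose! V hxV hVo hVB using h_nhds
  obtain ⟨t, htA, htc, hcov⟩ := TopologicalSpace.countable_cover_nhdsWithin (f := V) (s := A)
    fun x hx => mem_nhdsWithin_of_mem_nhds ((hVo x hx).mem_nhds (hxV x hx))
  rcases t.eq_empty_or_nonempty with rfl | hne
  · simp [Set.subset_eq_empty (by simpa using hcov) rfl]
  obtain ⟨x, rfl⟩ := htc.exists_eq_range hne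
  have hxA : ∀ i, x i ∈ A := fun i => htA ⟨i, rfl⟩
  set W : ℕ → Set X := fun i => A ∩ disjointed (fun i => V (x i)) i
  have hW : ∀ i, MeasurableSet (W i) := fun i =>
    hA.inter (.disjointed (fun i => (hVo _ (hxA i)).measurableSet) i)
  have hW_disj : Pairwise (Function.onFun Disjoint W) := fun i j hij =>
    (disjoint_disjointed _ hij).mono Set.inter_subset_right Set.inter_subset_right
  have hA_eq : A = ⋃ i, W i := by
    rw [← Set.inter_iUnion, iUnion_disjointed, eq_comm, Set.inter_eq_left]
    simpa using hcov
  rw [hA_eq, measure_iUnion hW_disj hW, measure_iUnion hW_disj hW]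
  exact ENNReal.tsum_le_tsum fun i => hVB (x i) (hxA i) _
    (Set.inter_subset_right.trans (disjointed_subset _ i)) (hW i) Set.inter_subset_left

lemma ennreal_le_of_forall_one_lt_pow_mul {a b : ℝ≥0∞} (k : ℕ)
    (h : ∀ K : ℝ≥0, 1 < K → a ≤ (K : ℝ≥0∞) ^ k * b) : a ≤ b := by
  have h_cont : Tendsto (fun K : ℝ≥0 => (K : ℝ≥0∞) ^ k) (𝓝[>] 1) (𝓝 1) := by
    simpa using ((by fun_prop : Continuous fun K : ℝ≥0 => (K : ℝ≥0∞) ^ k).tendsto 1).mono_left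
      nhdsWithin_le_nhds
  have h_lim := ENNReal.Tendsto.mul_const (b := b) h_cont (Or.inl one_ne_zero)
  rw [one_mul] at h_lim
  exact ge_of_tendsto h_lim (eventually_mem_nhdsWithin.mono fun K hK => h K hK)

lemma eventually_setLIntegral_comparison {X : Type*} [TopologicalSpace X] [MeasurableSpace X]
    {μ : Measure X} {J : X → ℝ≥0∞} {A : Set X} {a : X} (hJ : ContinuousWithinAt J A a)
    (h_pos : J a ≠ 0) (h_top : J a ≠ ⊤) {K : ℝ≥0} (hK : 1 < K) :
    ∀ᶠ B in (𝓝 a).smallSets, MeasurableSet B → B ⊆ A →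
      ∫⁻ x in B, J x ∂μ ≤ K * (J a * μ B) ∧ J a * μ B ≤ K * ∫⁻ x in B, J x ∂μ := by
  have hK' : (1 : ℝ≥0∞) < K := by exact_mod_cast hK
  have h_lt : J a < K * J a := by simpa using ENNReal.mul_lt_mul_left h_pos h_top hK'
  have h_le : ∀ᶠ x in 𝓝[A] a, J x < K * J a := hJ.eventually_lt_const h_lt
  have h_ge : ∀ᶠ x in 𝓝[A] a, J a < K * J x :=
    (ENNReal.Tendsto.const_mul hJ (Or.inr ENNReal.coe_ne_top)).eventually_const_lt h_lt
  obtain ⟨V, hV, hVJ⟩ := (eventually_nhdsWithin_iff.1 (h_le.and h_ge)).exists_mem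
  refine eventually_smallSets.2 ⟨V, hV, fun B hBV hB hBA => ⟨?_, ?_⟩⟩
  · rw [← mul_assoc, ← setLIntegral_const]
    exact setLIntegral_mono' hB fun x hx => (hVJ x (hBV hx) (hBA hx)).1.le
  · rw [← setLIntegral_const, ← lintegral_const_mul' _ _ ENNReal.coe_ne_top]
    exact setLIntegral_mono' hB fun x hx => (hVJ x (hBV hx) (hBA hx)).2.le

variable {E F : Type*} [NormedAddCommGroup E] [InnerProductSpace ℝ E] [FiniteDimensional ℝ E]
  [NormedAddCommGroup F] [InnerProductSpace ℝ F]

lemma continuous_normDet [CompleteSpace F] :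
    Continuous fun T : E →L[ℝ] F => T.toLinearMap.normDet := by
  have : CompleteSpace E := FiniteDimensional.complete ℝ E
  have h_eq : ∀ T : E →L[ℝ] F, T.toLinearMap.normDet = √((T.adjoint ∘L T).det) := fun T => by
    rw [← T.normDet_sq, RCLike.ofReal_real_eq_id, id, Real.sqrt_sq (LinearMap.normDet_nonneg _)]
  simp only [h_eq]
  exact (ContinuousLinearMap.continuous_det.comp (by fun_prop)).sqrt

lemma aemeasurable_normDet [MeasurableSpace E] [BorelSpace E] [CompleteSpace F]
    {f' : E → E →L[ℝ] F} {A : Set E} {μ : Measure E} (hA : MeasurableSet A)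
    (hf' : ContinuousOn f' A) :
    AEMeasurable (fun x => (f' x).toLinearMap.normDet) (μ.restrict A) :=
  (continuous_normDet.comp_continuousOn hf').aemeasurable hA

lemma normDet_pos_of_injective {T : E →ₗ[ℝ] F} (hT : Function.Injective T) : 0 < T.normDet :=
  T.normDet_nonneg.lt_of_ne' fun h =>
    LinearMap.normDet_eq_zero_iff_ker_ne_bot.1 h (LinearMap.ker_eq_bot.2 hT)

variable {f : E → F} {f' : E → E →L[ℝ] F} {T : E →L[ℝ] F} {a : E} {A : Set E} {K : ℝ≥0}

lemma eventually_edist_comparison (hf : HasStrictFDerivAt f T a)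
    (hT : Function.Injective T) (hK : 1 < K) :
    ∀ᶠ p in 𝓝 (a, a), edist (f p.1) (f p.2) ≤ K * edist (T p.1) (T p.2) ∧
      edist (T p.1) (T p.2) ≤ K * edist (f p.1) (f p.2) := by
  obtain ⟨c, -, hc⟩ := T.toLinearMap.exists_antilipschitzWith (LinearMap.ker_eq_bot.2 hT)
  have h_isBigO : (fun p : E × E => p.1 - p.2) =O[𝓝 (a, a)] fun p => T (p.1 - p.2) :=
    Asymptotics.IsBigO.of_bound c (Eventually.of_forall fun p => by
      simpa [dist_eq_norm] using hc.le_mul_dist p.1 p.2)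
  have hK' : (1 : ℝ) < K := by exact_mod_cast hK
  have h_inv : 0 < 1 - (K : ℝ)⁻¹ := sub_pos.2 (inv_lt_one_of_one_lt₀ hK')
  have h_edist : ∀ {y₁ y₂ z₁ z₂ : F}, ‖y₁ - y₂‖ ≤ K * ‖z₁ - z₂‖ →
      edist y₁ y₂ ≤ K * edist z₁ z₂ := fun h => by
    simpa only [edist_dist, dist_eq_norm, ENNReal.ofReal_mul K.coe_nonneg,
      ENNReal.ofReal_coe_nnreal] using ENNReal.ofReal_le_ofReal h
  filter_upwards [(hf.isLittleO.trans_isBigO h_isBigO).bound h_inv] with p hp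
  have h_close : |‖f p.1 - f p.2‖ - ‖T p.1 - T p.2‖| ≤ (1 - (K : ℝ)⁻¹) * ‖T p.1 - T p.2‖ := by
    rw [← map_sub]
    exact (abs_norm_sub_norm_le _ _).trans hp
  obtain ⟨h_lower, h_upper⟩ := abs_le.1 h_close
  refine ⟨h_edist ?_, h_edist ?_⟩
  · have h_two_sub : 2 - (K : ℝ)⁻¹ ≤ K := by
      nlinarith [inv_pos.2 (one_pos.trans hK'), mul_inv_cancel₀ (one_pos.trans hK').ne']
    nlinarith [norm_nonneg (T p.1 - T p.2)]
  · rw [← inv_mul_le_iff₀ (by positivity)]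
    linarith

lemma eventually_hausdorffMeasure_image_comparison [MeasurableSpace F] [BorelSpace F]
    (hf : HasStrictFDerivAt f T a) (hT : Function.Injective T) (hK : 1 < K) (d : ℕ) :
    ∀ᶠ B in (𝓝 a).smallSets, μH[d] (f '' B) ≤ (K : ℝ≥0∞) ^ d * μH[d] (T '' B) ∧
      μH[d] (T '' B) ≤ (K : ℝ≥0∞) ^ d * μH[d] (f '' B) := by
  have h := eventually_edist_comparison hf hT hK
  rw [nhds_prod_eq] at h
  obtain ⟨V, hV, hVf⟩ := eventually_prod_self_iff'.1 h
  refine eventually_smallSets.2 ⟨V, hV, fun B hB => ?_⟩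
  simp only [← ENNReal.rpow_natCast]
  exact ⟨hausdorffMeasure_image_le_of_edist_le d.cast_nonneg fun x hx y hy =>
      (hVf x (hB hx) y (hB hy)).1,
    hausdorffMeasure_image_le_of_edist_le d.cast_nonneg fun x hx y hy =>
      (hVf x (hB hx) y (hB hy)).2⟩

variable [MeasurableSpace E] [BorelSpace E] [MeasurableSpace F] [BorelSpace F]

lemma measurableEmbedding_domRestrict_of_hasStrictFDerivAt (hA : MeasurableSet A)
    (hf : ∀ a ∈ A, HasStrictFDerivAt f (f' a) a) (h_inj : A.InjOn f) :
    MeasurableEmbedding (A.domRestrict f) :=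
  ContinuousOn.measurableEmbedding hA
    (fun a ha => (hf a ha).continuousAt.continuousWithinAt) h_inj

variable [CompleteSpace F]

lemma eventually_hausdorffMeasure_image_comparison_lintegral
    (hf : HasStrictFDerivAt f (f' a) a) (hf' : ContinuousWithinAt f' A a)
    (h_inj : Function.Injective (f' a)) (hK : 1 < K) :
    ∀ᶠ B in (𝓝 a).smallSets, MeasurableSet B → B ⊆ A →
      μH[finrank ℝ E] (f '' B) ≤ (K : ℝ≥0∞) ^ (finrank ℝ E + 1) *
        ∫⁻ x in B, .ofReal (f' x).toLinearMap.normDet ∂μH[finrank ℝ E] ∧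
      ∫⁻ x in B, .ofReal (f' x).toLinearMap.normDet ∂μH[finrank ℝ E] ≤
        (K : ℝ≥0∞) ^ (finrank ℝ E + 1) * μH[finrank ℝ E] (f '' B) := by
  have h_cont : ContinuousWithinAt (fun x => ENNReal.ofReal (f' x).toLinearMap.normDet) A a :=
    (ENNReal.continuous_ofReal.comp continuous_normDet).continuousAt.comp_continuousWithinAt hf'
  have h_pos : ENNReal.ofReal (f' a).toLinearMap.normDet ≠ 0 := by
    simpa using normDet_pos_of_injective h_inj
  filter_upwards [eventually_hausdorffMeasure_image_comparison hf h_inj hK (finrank ℝ E),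
    eventually_setLIntegral_comparison (μ := μH[finrank ℝ E]) h_cont h_pos
      ENNReal.ofReal_ne_top hK] with B hB_image hB_density hB hBA
  have h_linear := (f' a).toLinearMap.hausdorffMeasure_image B
  rw [ContinuousLinearMap.coe_coe] at h_linear
  rw [h_linear] at hB_image
  specialize hB_density hB hBA
  constructor
  · refine hB_image.1.trans ?_
    rw [pow_succ, mul_assoc]
    exact mul_le_mul' le_rfl hB_density.2
  · refine hB_density.1.trans ?_
    rw [pow_succ', mul_assoc]
    exact mul_le_mul' le_rfl hB_image.2

theorem hausdorffMeasure_image_eq_lintegral_normDet (hA : MeasurableSet A)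
    (hf : ∀ a ∈ A, HasStrictFDerivAt f (f' a) a) (hf' : ContinuousOn f' A)
    (h_inj' : ∀ a ∈ A, Function.Injective (f' a)) (h_inj : A.InjOn f) :
    μH[finrank ℝ E] (f '' A) =
      ∫⁻ x in A, .ofReal (f' x).toLinearMap.normDet ∂μH[finrank ℝ E] := by
  have h_emb := measurableEmbedding_domRestrict_of_hasStrictFDerivAt hA hf h_inj
  set ν : Measure E := (μH[finrank ℝ E].comap (A.domRestrict f)).map (↑) with hν
  set κ : Measure E :=
    μH[finrank ℝ E].withDensity fun x => ENNReal.ofReal (f' x).toLinearMap.normDet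
  have hν_apply : ∀ B, MeasurableSet B → B ⊆ A → ν B = μH[finrank ℝ E] (f '' B) := by
    intro B hB hBA
    rw [hν, Measure.map_apply measurable_subtype_coe hB, h_emb.comap_apply, Set.domRestrict_eq,
      Set.image_comp, Subtype.image_preimage_coe, Set.inter_eq_right.2 hBA]
  have hκ_apply : ∀ B, MeasurableSet B →
      κ B = ∫⁻ x in B, .ofReal (f' x).toLinearMap.normDet ∂μH[finrank ℝ E] :=
    fun B hB => withDensity_apply _ hB
  have h_local : ∀ K : ℝ≥0, 1 < K → ∀ x ∈ A, ∀ᶠ B in (𝓝 x).smallSets, MeasurableSet B → B ⊆ A →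
      ν B ≤ (K : ℝ≥0∞) ^ (finrank ℝ E + 1) * κ B ∧
        κ B ≤ (K : ℝ≥0∞) ^ (finrank ℝ E + 1) * ν B := by
    intro K hK x hx
    filter_upwards [eventually_hausdorffMeasure_image_comparison_lintegral (hf x hx) (hf' x hx)
      (h_inj' x hx) hK] with B h hB hBA
    rw [hν_apply B hB hBA, hκ_apply B hB]
    exact h hB hBA
  rw [← hν_apply A hA subset_rfl, ← hκ_apply A hA]
  refine le_antisymm (ennreal_le_of_forall_one_lt_pow_mul (finrank ℝ E + 1) fun K hK => ?_)
    (ennreal_le_of_forall_one_lt_pow_mul (finrank ℝ E + 1) fun K hK => ?_)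
  · exact measure_le_of_locally_le (ν := (K : ℝ≥0∞) ^ (finrank ℝ E + 1) • κ) hA fun x hx =>
      (h_local K hK x hx).mono fun B h hB hBA => (h hB hBA).1
  · exact measure_le_of_locally_le (ν := (K : ℝ≥0∞) ^ (finrank ℝ E + 1) • ν) hA fun x hx =>
      (h_local K hK x hx).mono fun B h hB hBA => (h hB hBA).2

theorem map_withDensity_normDet_eq_hausdorffMeasure (hA : MeasurableSet A)
    (hf : ∀ a ∈ A, HasStrictFDerivAt f (f' a) a) (hf' : ContinuousOn f' A)
    (h_inj' : ∀ a ∈ A, Function.Injective (f' a)) (h_inj : A.InjOn f) :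
    Measure.map (A.domRestrict f) (Measure.comap (↑) ((μH[finrank ℝ E] : Measure E).withDensity
      fun x => ENNReal.ofReal (f' x).toLinearMap.normDet)) =
      μH[finrank ℝ E].restrict (f '' A) := by
  have h_emb := measurableEmbedding_domRestrict_of_hasStrictFDerivAt hA hf h_inj
  ext C hC
  have hC' : MeasurableSet (((↑) : A → E) '' (A.domRestrict f ⁻¹' C)) :=
    hA.subtype_image (h_emb.measurable hC)
  have hCA : ((↑) : A → E) '' (A.domRestrict f ⁻¹' C) ⊆ A := Subtype.coe_image_subset _ _
  rw [h_emb.map_apply, (MeasurableEmbedding.subtype_coe hA).comap_apply, withDensity_apply _ hC',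
    ← hausdorffMeasure_image_eq_lintegral_normDet hC' (fun a ha => hf a (hCA ha))
      (hf'.mono hCA) (fun a ha => h_inj' a (hCA ha)) (h_inj.mono hCA),
    Measure.restrict_apply hC, ← Set.image_comp, ← Set.domRestrict_eq,
    Set.image_preimage_eq_inter_range, Set.range_domRestrict]

variable {G : Type*} [NormedAddCommGroup G] [NormedSpace ℝ G]

theorem integrableOn_image_hausdorffMeasure_iff (hA : MeasurableSet A)
    (hf : ∀ a ∈ A, HasStrictFDerivAt f (f' a) a) (hf' : ContinuousOn f' A)
    (h_inj' : ∀ a ∈ A, Function.Injective (f' a)) (h_inj : A.InjOn f) (g : F → G) :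
    IntegrableOn g (f '' A) μH[finrank ℝ E] ↔
      IntegrableOn (fun x => (f' x).toLinearMap.normDet • g (f x)) A μH[finrank ℝ E] := by
  have h_emb := measurableEmbedding_domRestrict_of_hasStrictFDerivAt hA hf h_inj
  rw [IntegrableOn, ← map_withDensity_normDet_eq_hausdorffMeasure hA hf hf' h_inj' h_inj,
    h_emb.integrable_map_iff, Set.domRestrict_eq, ← Function.comp_assoc,
    ← (MeasurableEmbedding.subtype_coe hA).integrable_map_iff, map_comap_subtype_coe hA,
    restrict_withDensity hA]
  simp only [ENNReal.ofReal]
  rw [integrable_withDensity_iff_integrable_coe_smul₀ (aemeasurable_normDet hA hf').real_toNNReal]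
  simp only [IntegrableOn, Real.coe_toNNReal _ (LinearMap.normDet_nonneg _), Function.comp_apply]

theorem integral_image_hausdorffMeasure (hA : MeasurableSet A)
    (hf : ∀ a ∈ A, HasStrictFDerivAt f (f' a) a) (hf' : ContinuousOn f' A)
    (h_inj' : ∀ a ∈ A, Function.Injective (f' a)) (h_inj : A.InjOn f) (g : F → G) :
    ∫ y in f '' A, g y ∂μH[finrank ℝ E] =
      ∫ x in A, (f' x).toLinearMap.normDet • g (f x) ∂μH[finrank ℝ E] := by
  have h_emb := measurableEmbedding_domRestrict_of_hasStrictFDerivAt hA hf h_inj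
  rw [← map_withDensity_normDet_eq_hausdorffMeasure hA hf hf' h_inj' h_inj, h_emb.integral_map]
  simp only [Set.domRestrict_apply, ENNReal.ofReal]
  rw [← (MeasurableEmbedding.subtype_coe hA).integral_map (g := fun x => g (f x)),
    map_comap_subtype_coe hA, setIntegral_withDensity_eq_setIntegral_smul₀
      (aemeasurable_normDet hA hf').real_toNNReal _ hA]
  simp only [NNReal.smul_def, Real.coe_toNNReal _ (LinearMap.normDet_nonneg _)]

end AreaFormula

section Sheets

variable {V : Type*} [NormedAddCommGroup V] {s ε : ℝ}

/-- The level set `|ξ|² - τ² = s`, with the origin deleted. -/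
def hyperboloid (V : Type*) [NormedAddCommGroup V] (s : ℝ) : Set (WithLp 2 (V × ℝ)) :=
  {z | ‖z.fst‖ ^ 2 - z.snd ^ 2 = s ∧ z ≠ 0}

/-- The parametrization of the sheet of `hyperboloid V s` on which the time coordinate has the sign
`ε = ±1`; it is meant for `s < |ξ|²`. -/
def sheetMap (s ε : ℝ) (ξ : V) : WithLp 2 (V × ℝ) := WithLp.toLp 2 (ξ, ε * √(‖ξ‖ ^ 2 - s))

lemma fst_sheetMap (ξ : V) : (sheetMap s ε ξ).fst = ξ := rfl

lemma snd_sheetMap (ξ : V) : (sheetMap s ε ξ).snd = ε * √(‖ξ‖ ^ 2 - s) := rfl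

lemma sheetMap_injective : Function.Injective (sheetMap s ε : V → WithLp 2 (V × ℝ)) := fun _ _ h =>
  congrArg WithLp.fst h

lemma snd_sheetMap_ne_zero (hε : ε ≠ 0) {ξ : V} (hξ : s < ‖ξ‖ ^ 2) : (sheetMap s ε ξ).snd ≠ 0 :=
  mul_ne_zero hε (Real.sqrt_pos.2 (sub_pos.2 hξ)).ne'

lemma sheetMap_mem_hyperboloid (hε : ε ^ 2 = 1) {ξ : V} (hξ : s < ‖ξ‖ ^ 2) :
    sheetMap s ε ξ ∈ hyperboloid V s := by
  have hε0 : ε ≠ 0 := by rintro rfl; norm_num at hε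
  refine ⟨?_, fun h => snd_sheetMap_ne_zero hε0 hξ (congrArg WithLp.snd h)⟩
  simp [sheetMap, mul_pow, hε, Real.sq_sqrt (sub_pos.2 hξ).le]

lemma norm_sq_of_mem_hyperboloid {z : WithLp 2 (V × ℝ)} (hz : z ∈ hyperboloid V s) :
    ‖z‖ ^ 2 = 2 * ‖z.fst‖ ^ 2 - s := by
  rw [WithLp.prod_norm_sq_eq_of_L2, Real.norm_eq_abs, sq_abs]
  linarith [hz.1]

lemma norm_sheetMap (hε : ε ^ 2 = 1) {ξ : V} (hξ : s < ‖ξ‖ ^ 2) :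
    ‖sheetMap s ε ξ‖ = √(2 * ‖ξ‖ ^ 2 - s) := by
  rw [← Real.sqrt_sq (norm_nonneg (sheetMap s ε ξ)),
    norm_sq_of_mem_hyperboloid (sheetMap_mem_hyperboloid hε hξ), fst_sheetMap]

lemma measurableSet_lt_norm_sq [MeasurableSpace V] [OpensMeasurableSpace V] (s : ℝ) :
    MeasurableSet {ξ : V | s < ‖ξ‖ ^ 2} :=
  (isOpen_lt continuous_const (by fun_prop)).measurableSet

lemma disjoint_image_sheetMap (s : ℝ) :
    Disjoint (sheetMap s 1 '' {ξ : V | s < ‖ξ‖ ^ 2})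
      (sheetMap s (-1) '' {ξ : V | s < ‖ξ‖ ^ 2}) := by
  rw [Set.disjoint_left]
  rintro _ ⟨ξ, hξ, rfl⟩ ⟨ξ', hξ', h⟩
  have h_pos := Real.sqrt_pos.2 (sub_pos.2 hξ)
  have h_pos' := Real.sqrt_pos.2 (sub_pos.2 hξ')
  have h_snd : -1 * √(‖ξ'‖ ^ 2 - s) = 1 * √(‖ξ‖ ^ 2 - s) := congrArg WithLp.snd h
  linarith

lemma image_sheetMap_union (s : ℝ) :
    sheetMap s 1 '' {ξ : V | s < ‖ξ‖ ^ 2} ∪ sheetMap s (-1) '' {ξ : V | s < ‖ξ‖ ^ 2} =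
      hyperboloid V s \ {z | z.snd = 0} := by
  ext z
  constructor
  · rintro (⟨ξ, hξ, rfl⟩ | ⟨ξ, hξ, rfl⟩)
    · exact ⟨sheetMap_mem_hyperboloid (by norm_num) hξ, snd_sheetMap_ne_zero one_ne_zero hξ⟩
    · exact ⟨sheetMap_mem_hyperboloid (by norm_num) hξ, snd_sheetMap_ne_zero (by norm_num) hξ⟩
  · rintro ⟨⟨hz, -⟩, h_snd : z.snd ≠ 0⟩
    have h_lt : s < ‖z.fst‖ ^ 2 := by linarith [sq_pos_of_ne_zero h_snd]
    have h_sqrt : √(‖z.fst‖ ^ 2 - s) = |z.snd| := by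
      rw [← Real.sqrt_sq_eq_abs]; congr 1; linarith
    rcases lt_or_gt_of_ne h_snd with h_neg | h_pos
    · refine Or.inr ⟨z.fst, h_lt, ?_⟩
      rw [sheetMap, h_sqrt, abs_of_neg h_neg, neg_one_mul, neg_neg]
      rfl
    · refine Or.inl ⟨z.fst, h_lt, ?_⟩
      rw [sheetMap, h_sqrt, abs_of_pos h_pos, one_mul]
      rfl

lemma hyperboloid_inter_snd_eq_zero_subset (s : ℝ) :
    hyperboloid V s ∩ {z | z.snd = 0} ⊆ (fun ξ => WithLp.toLp 2 (ξ, 0)) '' Metric.sphere 0 √s := by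
  rintro z ⟨⟨hz, -⟩, h_snd : z.snd = 0⟩
  refine ⟨z.fst, ?_, ?_⟩
  · rw [mem_sphere_zero_iff_norm, ← hz, h_snd, zero_pow two_ne_zero, sub_zero,
      Real.sqrt_sq (norm_nonneg _)]
  · dsimp only
    rw [← h_snd]
    rfl

end Sheets

section Hyperboloid

variable {V : Type*} [NormedAddCommGroup V] [InnerProductSpace ℝ V] {s ε : ℝ}

/-- The embedding `v ↦ (v, ⟪g, v⟫)` of `V` as the graph of the functional `⟪g, ·⟫`: the derivative
of the parametrization of the graph of a function with gradient `g`. -/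
def graphMap (g : V) : V →L[ℝ] WithLp 2 (V × ℝ) :=
  (WithLp.prodContinuousLinearEquiv 2 ℝ V ℝ).symm.toContinuousLinearMap ∘L
    (ContinuousLinearMap.id ℝ V).prod (innerSL ℝ g)

lemma graphMap_apply (g v : V) : graphMap g v = WithLp.toLp 2 (v, ⟪g, v⟫) := rfl

lemma graphMap_injective (g : V) : Function.Injective (graphMap g) := fun _ _ h =>
  congrArg WithLp.fst h

lemma continuous_graphMap : Continuous (graphMap : V → V →L[ℝ] WithLp 2 (V × ℝ)) := by
  have h : Continuous fun g : V => (ContinuousLinearMap.id ℝ V).prod (innerSL ℝ g) :=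
    (ContinuousLinearMap.prodₗᵢ ℝ).continuous.comp
      (continuous_const.prodMk (innerSL ℝ).continuous)
  exact (ContinuousLinearMap.compL ℝ V (V × ℝ) (WithLp 2 (V × ℝ)) _).continuous.comp h

lemma normDet_graphMap [FiniteDimensional ℝ V] (g : V) :
    (graphMap g).toLinearMap.normDet = √(1 + ‖g‖ ^ 2) := by
  have h_adjoint : (graphMap g).toLinearMap.adjoint ∘ₗ (graphMap g).toLinearMap =
      LinearMap.transvection (innerₗ V g) g := by
    refine LinearMap.ext fun v => ext_inner_right ℝ fun w => ?_
    simp [LinearMap.adjoint_inner_left, graphMap_apply, LinearMap.transvection.apply,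
      WithLp.prod_inner_apply, inner_add_left, inner_smul_left, mul_comm]
  have h_sq := (graphMap g).toLinearMap.normDet_sq
  rw [h_adjoint, LinearMap.transvection.det, innerₗ_apply_apply, real_inner_self_eq_norm_sq] at h_sq
  rw [← h_sq, RCLike.ofReal_real_eq_id, id, Real.sqrt_sq (LinearMap.normDet_nonneg _)]

lemma hasStrictFDerivAt_graph {φ : V → ℝ} {g a : V} (hφ : HasStrictFDerivAt φ (innerSL ℝ g) a) :
    HasStrictFDerivAt (fun v => WithLp.toLp 2 (v, φ v)) (graphMap g) a :=
  (WithLp.prodContinuousLinearEquiv 2 ℝ V ℝ).symm.hasStrictFDerivAt.comp a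
    ((hasStrictFDerivAt_id a).prodMk hφ)

lemma hasStrictFDerivAt_sheetMap {a : V} (ha : s < ‖a‖ ^ 2) :
    HasStrictFDerivAt (sheetMap s ε) (graphMap ((ε / √(‖a‖ ^ 2 - s)) • a)) a := by
  refine hasStrictFDerivAt_graph ?_
  convert! (((hasStrictFDerivAt_norm_sq a).sub_const s).sqrt (sub_pos.2 ha).ne').const_mul ε using 1
  ext v
  simp
  ring

lemma continuousOn_graphMap_sheet :
    ContinuousOn (fun ξ : V => graphMap ((ε / √(‖ξ‖ ^ 2 - s)) • ξ)) {ξ | s < ‖ξ‖ ^ 2} := by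
  intro ξ hξ
  have : √(‖ξ‖ ^ 2 - s) ≠ 0 := (Real.sqrt_pos.2 (sub_pos.2 hξ)).ne'
  refine (continuous_graphMap.continuousAt.comp ?_).continuousWithinAt
  fun_prop (disch := assumption)

lemma normDet_sheet [FiniteDimensional ℝ V] (hε : ε ^ 2 = 1) {ξ : V} (hξ : s < ‖ξ‖ ^ 2) :
    (graphMap ((ε / √(‖ξ‖ ^ 2 - s)) • ξ)).toLinearMap.normDet =
      √(2 * ‖ξ‖ ^ 2 - s) / √(‖ξ‖ ^ 2 - s) := by
  have h0 : 0 < ‖ξ‖ ^ 2 - s := sub_pos.2 hξ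
  rw [normDet_graphMap, ← Real.sqrt_div' _ h0.le, norm_smul, mul_pow, Real.norm_eq_abs, sq_abs,
    div_pow, hε, Real.sq_sqrt h0.le]
  congr 1
  field_simp
  ring

variable [FiniteDimensional ℝ V] [MeasurableSpace V] [BorelSpace V]

lemma exists_hausdorffMeasure_eq_smul_volume :
    ∃ c : ℝ≥0, (μH[finrank ℝ V] : Measure V) = c • volume :=
  ⟨_, Measure.isAddLeftInvariant_eq_smul _ _⟩

lemma hausdorffMeasure_hyperboloid_inter_snd_eq_zero [Nontrivial V] (s : ℝ) :
    μH[finrank ℝ V] (hyperboloid V s ∩ {z | z.snd = 0}) = 0 := by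
  have h_iso : Isometry fun ξ : V => WithLp.toLp 2 (ξ, (0 : ℝ)) :=
    Isometry.of_dist_eq (WithLp.dist_toLp_fst 2 V ℝ)
  refine measure_mono_null (hyperboloid_inter_snd_eq_zero_subset s) ?_
  rw [h_iso.hausdorffMeasure_image (Or.inl (Nat.cast_nonneg _)), Measure.addHaar_sphere]

lemma hyperboloid_ae_eq_image_sheetMap [Nontrivial V] (s : ℝ) :
    hyperboloid V s =ᵐ[μH[finrank ℝ V]]
      (sheetMap s 1 '' {ξ : V | s < ‖ξ‖ ^ 2} ∪ sheetMap s (-1) '' {ξ : V | s < ‖ξ‖ ^ 2} :) := by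
  rw [image_sheetMap_union]
  exact (sdiff_ae_eq_self.2 (hausdorffMeasure_hyperboloid_inter_snd_eq_zero s)).symm

variable {G : Type*} [NormedAddCommGroup G] [NormedSpace ℝ G]

lemma integrableOn_image_sheetMap_iff (hε : ε ^ 2 = 1) (F : WithLp 2 (V × ℝ) → G) :
    IntegrableOn F (sheetMap s ε '' {ξ : V | s < ‖ξ‖ ^ 2}) μH[finrank ℝ V] ↔
      IntegrableOn (fun ξ => (√(2 * ‖ξ‖ ^ 2 - s) / √(‖ξ‖ ^ 2 - s)) • F (sheetMap s ε ξ))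
        {ξ | s < ‖ξ‖ ^ 2} μH[finrank ℝ V] := by
  rw [integrableOn_image_hausdorffMeasure_iff (measurableSet_lt_norm_sq s)
    (fun a ha => hasStrictFDerivAt_sheetMap ha) continuousOn_graphMap_sheet
    (fun a _ => graphMap_injective _) sheetMap_injective.injOn]
  exact integrableOn_congr_fun (fun ξ hξ => by rw [normDet_sheet hε hξ])
    (measurableSet_lt_norm_sq s)

lemma integral_image_sheetMap (hε : ε ^ 2 = 1) (F : WithLp 2 (V × ℝ) → G) :
    ∫ z in sheetMap s ε '' {ξ : V | s < ‖ξ‖ ^ 2}, F z ∂μH[finrank ℝ V] =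
      ∫ ξ in {ξ | s < ‖ξ‖ ^ 2},
        (√(2 * ‖ξ‖ ^ 2 - s) / √(‖ξ‖ ^ 2 - s)) • F (sheetMap s ε ξ) ∂μH[finrank ℝ V] := by
  rw [integral_image_hausdorffMeasure (measurableSet_lt_norm_sq s)
    (fun a ha => hasStrictFDerivAt_sheetMap ha) continuousOn_graphMap_sheet
    (fun a _ => graphMap_injective _) sheetMap_injective.injOn]
  exact setIntegral_congr_fun (measurableSet_lt_norm_sq s)
    fun ξ hξ => by rw [normDet_sheet hε hξ]

theorem integral_hyperboloid [Nontrivial V] {F : WithLp 2 (V × ℝ) → G}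
    (hF : ∀ ε : ℝ, ε ^ 2 = 1 → IntegrableOn
      (fun ξ => (√(2 * ‖ξ‖ ^ 2 - s) / √(‖ξ‖ ^ 2 - s)) • F (sheetMap s ε ξ))
      {ξ | s < ‖ξ‖ ^ 2} μH[finrank ℝ V]) :
    ∫ z in hyperboloid V s, F z ∂μH[finrank ℝ V] =
      (∫ ξ in {ξ | s < ‖ξ‖ ^ 2},
        (√(2 * ‖ξ‖ ^ 2 - s) / √(‖ξ‖ ^ 2 - s)) • F (sheetMap s 1 ξ) ∂μH[finrank ℝ V]) +
      ∫ ξ in {ξ | s < ‖ξ‖ ^ 2},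
        (√(2 * ‖ξ‖ ^ 2 - s) / √(‖ξ‖ ^ 2 - s)) • F (sheetMap s (-1) ξ) ∂μH[finrank ℝ V] := by
  have h_int : ∀ ε : ℝ, ε ^ 2 = 1 →
      IntegrableOn F (sheetMap s ε '' {ξ : V | s < ‖ξ‖ ^ 2}) μH[finrank ℝ V] :=
    fun ε hε => (integrableOn_image_sheetMap_iff hε F).2 (hF ε hε)
  have h_meas : MeasurableSet (sheetMap s (-1) '' {ξ : V | s < ‖ξ‖ ^ 2}) :=
    (measurableSet_lt_norm_sq s).image_of_continuousOn_injOn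
      (fun a ha => (hasStrictFDerivAt_sheetMap ha).continuousAt.continuousWithinAt)
      sheetMap_injective.injOn
  rw [setIntegral_congr_set (hyperboloid_ae_eq_image_sheetMap s),
    setIntegral_union (disjoint_image_sheetMap s) h_meas (h_int 1 (by norm_num))
      (h_int (-1) (by norm_num)), integral_image_sheetMap (by norm_num),
    integral_image_sheetMap (by norm_num)]

end Hyperboloid

section Spacetime

variable {m : ℕ}

/-- The splitting `z = (ξ, τ)` of spacetime into space and time. -/
def splitTime (m : ℕ) : Spacetime m ≃ₗᵢ[ℝ] WithLp 2 (EuclideanSpace ℝ (Fin m) × ℝ) :=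
  LinearIsometry.toLinearIsometryEquiv
    { toFun := fun z => WithLp.toLp 2 (WithLp.toLp 2 fun i => z i.castSucc, timeCoord z)
      map_add' := fun _ _ => rfl
      map_smul' := fun _ _ => rfl
      norm_map' := fun z => by
        rw [← sq_eq_sq₀ (norm_nonneg _) (norm_nonneg _), WithLp.prod_norm_sq_eq_of_L2]
        simp [EuclideanSpace.norm_sq_eq, Fin.sum_univ_castSucc, timeCoord] }
    (by simp [(WithLp.linearEquiv 2 ℝ (EuclideanSpace ℝ (Fin m) × ℝ)).finrank_eq])

@[simp] lemma snd_splitTime (z : Spacetime m) : (splitTime m z).snd = timeCoord z := rfl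

lemma waveSymbol_eq (z : Spacetime m) :
    waveSymbol z = ‖(splitTime m z).fst‖ ^ 2 - (splitTime m z).snd ^ 2 := by
  have h_norm := (splitTime m z).prod_norm_sq_eq_of_L2
  rw [LinearIsometryEquiv.norm_map, Real.norm_eq_abs, sq_abs] at h_norm
  rw [waveSymbol, h_norm, snd_splitTime]
  ring

lemma map_splitTime_levelMeasure (s : ℝ) :
    (levelMeasure m s).map (splitTime m).toMeasurableEquiv =
      μH[(m : ℝ)].restrict (hyperboloid (EuclideanSpace ℝ (Fin m)) s) := by
  have h_set : {z : Spacetime m | waveSymbol z = s ∧ z ≠ 0} =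
      (splitTime m).toMeasurableEquiv ⁻¹' hyperboloid (EuclideanSpace ℝ (Fin m)) s := by
    ext z
    simp [hyperboloid, waveSymbol_eq]
  rw [levelMeasure, h_set, ← MeasurableEquiv.restrict_map]
  exact congrArg (Measure.restrict · _)
    ((splitTime m).toIsometryEquiv.map_hausdorffMeasure m)

lemma sigmaCheck_eq_integral_hyperboloid (η : Spacetime m → ℝ) (s : ℝ) (w : Spacetime m) :
    sigmaCheck η s w = ∫ z in hyperboloid (EuclideanSpace ℝ (Fin m)) s,
      (η ((splitTime m).symm z) : ℂ) * 𝐞 ⟪z, splitTime m w⟫ ∂μH[(m : ℝ)] := by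
  rw [← map_splitTime_levelMeasure, integral_map_equiv, sigmaCheck]
  congr 1 with z
  simp only [LinearIsometryEquiv.coe_toMeasurableEquiv, LinearIsometryEquiv.symm_apply_apply,
    LinearIsometryEquiv.inner_map_map, Real.fourierChar_apply]
  congr 2
  push_cast
  ring

end Spacetime

section Superposition

lemma continuous_fourier {f : ℝ → ℂ} (hf : Integrable f) : Continuous (𝓕 f) :=
  VectorFourier.fourierIntegral_continuous Real.continuous_fourierChar
    (by exact continuous_inner) hf

lemma norm_fourier_le (f : ℝ → ℂ) (u : ℝ) : ‖𝓕 f u‖ ≤ ∫ l, ‖f l‖ :=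
  VectorFourier.norm_fourierIntegral_le_integral_norm _ _ _ _ _

lemma fourier_sub {f g : ℝ → ℂ} (hf : Integrable f) (hg : Integrable g) (u : ℝ) :
    𝓕 (f - g) u = 𝓕 f u - 𝓕 g u := by
  simp only [Real.fourier_eq]
  rw [← integral_sub ((Real.fourierIntegral_convergent_iff u).2 hf)
    ((Real.fourierIntegral_convergent_iff u).2 hg)]
  simp only [Pi.sub_apply, smul_sub]

lemma eq_zero_of_norm_le_integral_norm_of_schwartz {Λ : (ℝ → ℂ) → ℂ} {K : ℝ}
    (h_sub : ∀ f g, Integrable f → Integrable g → Λ (f - g) = Λ f - Λ g)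
    (h_le : ∀ f, Integrable f → ‖Λ f‖ ≤ K * ∫ l, ‖f l‖)
    (h_schwartz : ∀ g : SchwartzMap ℝ ℂ, Λ g = 0) {f : ℝ → ℂ} (hf : Integrable f) : Λ f = 0 := by
  rw [← norm_le_zero_iff]
  refine le_of_forall_pos_le_add fun ε hε => ?_
  have hδ : 0 < ε / (|K| + 1) := by positivity
  obtain ⟨g, hg_supp, hg_smooth, hfg⟩ := (memLp_one_iff_integrable.2 hf).exist_eLpNorm_sub_le
    ENNReal.one_ne_top le_rfl hδ
  have hg : Integrable g := (hg_supp.toSchwartzMap hg_smooth).integrable (μ := volume)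
  have hg_zero : Λ g = 0 := h_schwartz (hg_supp.toSchwartzMap hg_smooth)
  rw [eLpNorm_one_eq_lintegral_enorm, ← ofReal_integral_norm_eq_lintegral_enorm (hf.sub hg),
    ENNReal.ofReal_le_ofReal_iff hδ.le] at hfg
  calc ‖Λ f‖ = ‖Λ (f - g)‖ := by rw [h_sub f g hf hg, hg_zero, sub_zero]
    _ ≤ |K| * ∫ l, ‖(f - g) l‖ := (h_le _ (hf.sub hg)).trans (by gcongr; exact le_abs_self K)
    _ ≤ (|K| + 1) * (ε / (|K| + 1)) := by gcongr; linarith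
    _ = 0 + ε := by field_simp; ring

variable {X : Type*} [MeasurableSpace X] {γ : Measure X} {φ : X → ℝ} {g : X → ℂ}

lemma integral_comp_mul_eq_integral_fourier_mul_of_continuous [SFinite γ] (hφ : Measurable φ)
    (hg : Integrable g γ) {H : ℝ → ℂ} (hH_cont : Continuous H) (hH : Integrable H)
    (hFH : Integrable (𝓕 H)) :
    ∫ x, H (φ x) * g x ∂γ = ∫ u, 𝓕 H u * ∫ x, 𝐞 (u * φ x) * g x ∂γ := by
  have h_inv : ∀ l, H l = ∫ u, 𝐞 (u * l) * 𝓕 H u := fun l => by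
    conv_lhs => rw [← hH_cont.fourierInv_fourier_eq hH hFH, Real.fourierInv_eq]
    simp only [Circle.smul_def, smul_eq_mul, Real.inner_apply]
  simp_rw [h_inv, ← integral_const_mul, ← integral_mul_const]
  rw [integral_integral_swap]
  · simp only [mul_left_comm, mul_assoc]
  · refine ((hg.mul_prod hFH).bdd_mul (c := 1) (f := fun p => (𝐞 (p.2 * φ p.1) : ℂ)) ?_
      (ae_of_all _ fun _ => (Circle.norm_coe _).le)).congr (ae_of_all _ fun p => ?_)
    · have : Measurable fun p : X × ℝ => p.2 * φ p.1 := by fun_prop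
      exact ((continuous_subtype_val.comp Real.continuous_fourierChar).measurable.comp
        this).aestronglyMeasurable
    · simp only [Function.uncurry]
      ring

variable {C : ℝ≥0}

lemma integrable_comp_of_map_le (hφ : AEMeasurable φ γ) (h_map : γ.map φ ≤ C • volume) {H : ℝ → ℂ}
    (hH : Integrable H) : Integrable (fun x => H (φ x)) γ :=
  (hH.of_measure_le_smul ENNReal.coe_ne_top h_map).comp_aemeasurable hφ

lemma norm_integral_comp_mul_le (hφ : AEMeasurable φ γ) (h_map : γ.map φ ≤ C • volume)
    (hg : ∀ x, ‖g x‖ ≤ 1) {H : ℝ → ℂ} (hH : Integrable H) :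
    ‖∫ x, H (φ x) * g x ∂γ‖ ≤ C * ∫ l, ‖H l‖ := by
  have hH_map : Integrable H (γ.map φ) := hH.of_measure_le_smul ENNReal.coe_ne_top h_map
  calc ‖∫ x, H (φ x) * g x ∂γ‖ ≤ ∫ x, ‖H (φ x)‖ ∂γ := by
        refine norm_integral_le_of_norm_le (integrable_comp_of_map_le hφ h_map hH).norm
          (ae_of_all _ fun x => ?_)
        rw [norm_mul]
        exact mul_le_of_le_one_right (norm_nonneg _) (hg x)
    _ = ∫ l, ‖H l‖ ∂γ.map φ := (integral_map hφ hH_map.norm.aestronglyMeasurable).symm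
    _ ≤ ∫ l, ‖H l‖ ∂(C • volume) :=
        integral_mono_measure h_map (ae_of_all _ fun _ => norm_nonneg _)
          (hH.norm.smul_measure_nnreal)
    _ = C * ∫ l, ‖H l‖ := by rw [integral_smul_nnreal_measure, NNReal.smul_def, smul_eq_mul]

/- Both sides are continuous in the `L¹` norm of `H`: the left one because the image of `γ` under
`φ` has a bounded density, the right one because the transform of `g` is integrable. Hence it
suffices to treat Schwartz functions, for which Fubini applies. -/
theorem integral_comp_mul_eq_integral_fourier_mul [IsFiniteMeasure γ] (hφ : Measurable φ)
    (h_map : γ.map φ ≤ C • volume) (hg_meas : AEStronglyMeasurable g γ) (hg : ∀ x, ‖g x‖ ≤ 1)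
    (h_int : Integrable fun u : ℝ => ∫ x, 𝐞 (u * φ x) * g x ∂γ) {H : ℝ → ℂ} (hH : Integrable H) :
    ∫ x, H (φ x) * g x ∂γ = ∫ u, 𝓕 H u * ∫ x, 𝐞 (u * φ x) * g x ∂γ := by
  have h_left : ∀ f : ℝ → ℂ, Integrable f → Integrable (fun x => f (φ x) * g x) γ := fun f hf =>
    (integrable_comp_of_map_le hφ.aemeasurable h_map hf).mul_bdd hg_meas (ae_of_all _ hg)
  have h_right : ∀ f : ℝ → ℂ, Integrable f →
      Integrable fun u : ℝ => 𝓕 f u * ∫ x, 𝐞 (u * φ x) * g x ∂γ := fun f hf =>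
    h_int.bdd_mul (continuous_fourier hf).aestronglyMeasurable (ae_of_all _ (norm_fourier_le f))
  rw [← sub_eq_zero]
  refine eq_zero_of_norm_le_integral_norm_of_schwartz
    (K := C + ∫ u : ℝ, ‖∫ x, 𝐞 (u * φ x) * g x ∂γ‖) (fun f₁ f₂ hf₁ hf₂ => ?_)
    (fun f hf => ?_) (fun h => ?_) hH
    (Λ := fun f => (∫ x, f (φ x) * g x ∂γ) - ∫ u, 𝓕 f u * ∫ x, 𝐞 (u * φ x) * g x ∂γ)
  · simp only [fourier_sub hf₁ hf₂, Pi.sub_apply, sub_mul]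
    rw [integral_sub (h_left _ hf₁) (h_left _ hf₂), integral_sub (h_right _ hf₁) (h_right _ hf₂)]
    ring
  · rw [add_mul, ← integral_mul_const]
    refine (norm_sub_le _ _).trans (add_le_add
      (norm_integral_comp_mul_le hφ.aemeasurable h_map hg hf)
      (norm_integral_le_of_norm_le (h_int.norm.mul_const _) (ae_of_all _ fun u => ?_)))
    rw [norm_mul, mul_comm]
    gcongr
    exact norm_fourier_le f u
  · rw [sub_eq_zero]
    refine integral_comp_mul_eq_integral_fourier_mul_of_continuous hφ
      ((integrable_const (1 : ℝ)).mono' hg_meas (ae_of_all _ hg)) h.continuous h.integrable ?_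
    rw [← SchwartzMap.fourier_coe]
    exact (𝓕 h).integrable

end Superposition

section GaussMeasure

variable {V : Type*} [NormedAddCommGroup V] [InnerProductSpace ℝ V] [MeasurableSpace V]
  [BorelSpace V] [FiniteDimensional ℝ V]

/-- The probability measure `e^{-π|v|²} dv`. -/
def gaussMeasure (V : Type*) [NormedAddCommGroup V] [InnerProductSpace ℝ V] [MeasurableSpace V]
    [BorelSpace V] [FiniteDimensional ℝ V] : Measure V :=
  volume.withDensity fun v => (Real.toNNReal (rexp (-π * ‖v‖ ^ 2)) : ℝ≥0∞)

lemma lintegral_comp_norm [Nontrivial V] {f : ℝ → ℝ≥0∞} (hf : Measurable f) :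
    ∫⁻ v : V, f ‖v‖ = (volume : Measure V).toSphere Set.univ *
      ∫⁻ r in Set.Ioi 0, ENNReal.ofReal (r ^ (finrank ℝ V - 1)) * f r := by
  calc ∫⁻ v : V, f ‖v‖ = ∫⁻ v : ({0}ᶜ : Set V), f ‖v.1‖ ∂volume.comap Subtype.val := by
        rw [lintegral_subtype_comap (measurableSet_singleton _).compl fun v : V => f ‖v‖,
          restrict_compl_singleton]
    _ = ∫⁻ p : Metric.sphere (0 : V) 1 × Set.Ioi (0 : ℝ), f p.2
          ∂(volume : Measure V).toSphere.prod (.volumeIoiPow (finrank ℝ V - 1)) := by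
        simpa using
          (volume : Measure V).measurePreserving_homeomorphUnitSphereProd.lintegral_comp_emb
            (Homeomorph.measurableEmbedding _) fun p => f p.2
    _ = (volume : Measure V).toSphere Set.univ *
          ∫⁻ r : Set.Ioi (0 : ℝ), f r ∂.volumeIoiPow (finrank ℝ V - 1) := by
        rw [lintegral_prod _ (by fun_prop)]
        simp only [lintegral_const, mul_comm]
    _ = _ := by
        rw [Measure.volumeIoiPow, lintegral_withDensity_eq_lintegral_mul _ (by fun_prop)
          (by fun_prop)]
        congr 1
        exact lintegral_subtype_comap measurableSet_Ioi
          fun r : ℝ => ENNReal.ofReal (r ^ (finrank ℝ V - 1)) * f r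

lemma pow_mul_exp_neg_pi_sq_le (k : ℕ) {y : ℝ} (hy : 0 ≤ y) :
    y ^ k * rexp (-π * y ^ 2) ≤ k.factorial * rexp 1 := by
  have h_pow : y ^ k ≤ k.factorial * rexp y := by
    have := Real.pow_div_factorial_le_exp y hy k
    rwa [div_le_iff₀' (by positivity)] at this
  calc y ^ k * rexp (-π * y ^ 2) ≤ k.factorial * rexp y * rexp (-π * y ^ 2) := by gcongr
    _ = k.factorial * rexp (y + -π * y ^ 2) := by rw [mul_assoc, ← Real.exp_add]
    _ ≤ _ := by
      gcongr
      nlinarith [Real.two_le_pi, sq_nonneg (y - 1), sq_nonneg y]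

lemma setLIntegral_indicator_sq_le {s : Set ℝ} (hs : MeasurableSet s) :
    ∫⁻ r in Set.Ioi 0, ENNReal.ofReal (2 * r) * s.indicator 1 (r ^ 2) ≤ volume s := by
  have h_deriv : ∀ r ∈ Set.Ioi (0 : ℝ), HasDerivWithinAt (· ^ 2) (2 * r) (Set.Ioi 0) r :=
    fun r _ => by simpa using (hasDerivAt_pow 2 r).hasDerivWithinAt
  have h_inj : Set.InjOn (fun r : ℝ => r ^ 2) (Set.Ioi 0) := fun a ha b hb h =>
    (pow_left_inj₀ (le_of_lt ha) (le_of_lt hb) two_ne_zero).1 h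
  calc _ = ∫⁻ r in Set.Ioi 0, ENNReal.ofReal |2 * r| * s.indicator 1 (r ^ 2) :=
        setLIntegral_congr_fun measurableSet_Ioi fun r (hr : 0 < r) => by
          rw [abs_of_pos (by positivity)]
    _ = ∫⁻ l in (· ^ 2) '' Set.Ioi (0 : ℝ), s.indicator 1 l :=
        (lintegral_image_eq_lintegral_abs_deriv_mul measurableSet_Ioi h_deriv h_inj _).symm
    _ ≤ ∫⁻ l, s.indicator 1 l := setLIntegral_le_lintegral _ _
    _ = volume s := lintegral_indicator_one hs

lemma exists_map_norm_sq_gaussMeasure_le (hd : 2 ≤ finrank ℝ V) :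
    ∃ C : ℝ≥0, (gaussMeasure V).map (‖·‖ ^ 2) ≤ C • volume := by
  have : Nontrivial V := Module.nontrivial_of_finrank_pos (R := ℝ) (by lia)
  set d := finrank ℝ V
  set M : ℝ := (d - 2).factorial * rexp 1
  refine ⟨((volume : Measure V).toSphere Set.univ).toNNReal * M.toNNReal,
    Measure.le_iff.2 fun s hs => ?_⟩
  have h_density : ∀ r ∈ Set.Ioi (0 : ℝ), ENNReal.ofReal (r ^ (d - 1)) *
      (ENNReal.ofReal (rexp (-π * r ^ 2)) * s.indicator 1 (r ^ 2)) ≤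
      ENNReal.ofReal M * (ENNReal.ofReal (2 * r) * s.indicator 1 (r ^ 2)) := by
    intro r (hr : 0 < r)
    rw [← mul_assoc, ← mul_assoc, ← ENNReal.ofReal_mul (by positivity),
      ← ENNReal.ofReal_mul (by positivity)]
    gcongr ENNReal.ofReal ?_ * _
    calc r ^ (d - 1) * rexp (-π * r ^ 2) = r ^ (d - 2) * rexp (-π * r ^ 2) * r := by
          rw [show d - 1 = d - 2 + 1 by lia, pow_succ]; ring
      _ ≤ M * (2 * r) := by
          gcongr
          · exact pow_mul_exp_neg_pi_sq_le _ hr.le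
          · linarith
  have h_meas : Measurable (s.indicator (1 : ℝ → ℝ≥0∞)) := measurable_one.indicator hs
  calc (gaussMeasure V).map (‖·‖ ^ 2) s
      = ∫⁻ v : V, ENNReal.ofReal (rexp (-π * ‖v‖ ^ 2)) * s.indicator 1 (‖v‖ ^ 2) := by
        rw [← lintegral_indicator_one hs, lintegral_map h_meas (by fun_prop), gaussMeasure,
          lintegral_withDensity_eq_lintegral_mul _ (by fun_prop) (by fun_prop)]
        rfl
    _ ≤ (volume : Measure V).toSphere Set.univ * (ENNReal.ofReal M * volume s) := by
        rw [lintegral_comp_norm (f := fun r => ENNReal.ofReal (rexp (-π * r ^ 2)) *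
          s.indicator 1 (r ^ 2)) (by fun_prop)]
        gcongr
        refine (setLIntegral_mono' measurableSet_Ioi h_density).trans ?_
        rw [lintegral_const_mul _ (by fun_prop)]
        gcongr
        exact setLIntegral_indicator_sq_le hs
    _ = _ := by
        rw [Measure.smul_apply, ENNReal.smul_def, smul_eq_mul, ENNReal.coe_mul,
          ENNReal.coe_toNNReal (measure_ne_top _ _), mul_assoc]
        rfl

lemma integral_gaussMeasure (f : V → ℂ) :
    ∫ v, f v ∂gaussMeasure V = ∫ v, (rexp (-π * ‖v‖ ^ 2) : ℂ) * f v := by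
  rw [gaussMeasure, integral_withDensity_eq_integral_smul (by fun_prop)]
  refine integral_congr_ae (ae_of_all _ fun v => ?_)
  simp only [NNReal.smul_def, Real.coe_toNNReal _ (Real.exp_pos _).le, Complex.real_smul]

instance : IsFiniteMeasure (gaussMeasure V) := by
  refine isFiniteMeasure_withDensity_ofReal (Integrable.hasFiniteIntegral ?_)
  have h := GaussianFourier.integrable_cexp_neg_mul_sq_norm_add (b := π) (by simpa using pi_pos) 0
    (0 : V)
  simpa [Complex.norm_exp, ← Complex.ofReal_pow] using h.norm

lemma integrable_gaussMeasure_iff (f : V → ℂ) :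
    Integrable f (gaussMeasure V) ↔ Integrable fun v => (rexp (-π * ‖v‖ ^ 2) : ℂ) * f v := by
  rw [gaussMeasure, integrable_withDensity_iff_integrable_smul (by fun_prop)]
  simp only [NNReal.smul_def, Real.coe_toNNReal _ (Real.exp_pos _).le, Complex.real_smul]

/-- The Fourier transform of `gaussMeasure V` lifted to the paraboloid `{(v, |v|²)}`. -/
def gaussTransform (x : V) (u : ℝ) : ℂ :=
  ∫ v, 𝐞 (u * ‖v‖ ^ 2) * 𝐞 ⟪x, v⟫ ∂gaussMeasure V

lemma gaussTransform_eq (x : V) (u : ℝ) :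
    gaussTransform x u = (1 - 2 * u * Complex.I)⁻¹ ^ ((finrank ℝ V : ℂ) / 2) *
      Complex.exp (-(π * ‖x‖ ^ 2 * (1 - 2 * u * Complex.I)⁻¹)) := by
  have h_re : 0 < ((π : ℂ) * (1 - 2 * u * Complex.I)).re := by simpa using pi_pos
  have h_ne : 1 - 2 * u * Complex.I ≠ 0 := fun h => by simp [h] at h_re
  have h_gauss := GaussianFourier.integral_cexp_neg_mul_sq_norm_add h_re (2 * π * Complex.I) x
  rw [div_mul_cancel_left₀ (by simp [pi_ne_zero])] at h_gauss
  convert h_gauss using 1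
  · rw [gaussTransform, integral_gaussMeasure]
    congr 1 with v
    rw [Real.fourierChar_apply, Real.fourierChar_apply, Complex.ofReal_exp, ← Complex.exp_add,
      ← Complex.exp_add]
    congr 1
    push_cast
    ring
  · congr 2
    rw [mul_pow, Complex.I_sq]
    field_simp
    ring

lemma norm_gaussTransform_le (x : V) (u : ℝ) :
    ‖gaussTransform x u‖ ≤
      2 ^ ((finrank ℝ V : ℝ) / 2) * (1 + |u|) ^ (-((finrank ℝ V : ℝ) / 2)) := by
  have h_exp : ‖Complex.exp (-(π * ‖x‖ ^ 2 * (1 - 2 * u * Complex.I)⁻¹))‖ ≤ 1 := by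
    rw [Complex.norm_exp, Real.exp_le_one_iff, Complex.neg_re, neg_nonpos,
      show (π * ‖x‖ ^ 2 : ℂ) = ((π * ‖x‖ ^ 2 : ℝ) : ℂ) by push_cast; rfl, Complex.re_ofReal_mul,
      Complex.inv_re]
    have h_re : 0 ≤ (1 - 2 * u * Complex.I).re := by simp
    exact mul_nonneg (by positivity) (div_nonneg h_re (Complex.normSq_nonneg _))
  have h_base : (1 + |u|) / 2 ≤ ‖1 - 2 * u * Complex.I‖ := by
    have h_re : 1 ≤ ‖1 - 2 * u * Complex.I‖ := by
      simpa using Complex.abs_re_le_norm (1 - 2 * u * Complex.I)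
    have h_im : 2 * |u| ≤ ‖1 - 2 * u * Complex.I‖ := by
      simpa [abs_mul] using Complex.abs_im_le_norm (1 - 2 * u * Complex.I)
    linarith
  have h_cpow : ((finrank ℝ V : ℂ) / 2) = ((finrank ℝ V / 2 : ℝ) : ℂ) := by push_cast; rfl
  calc ‖gaussTransform x u‖ ≤ ‖(1 - 2 * u * Complex.I)⁻¹‖ ^ ((finrank ℝ V : ℝ) / 2) * 1 := by
        rw [gaussTransform_eq, norm_mul, h_cpow, Complex.norm_cpow_real]
        gcongr
    _ ≤ ((1 + |u|) / 2)⁻¹ ^ ((finrank ℝ V : ℝ) / 2) * 1 := by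
        rw [norm_inv]
        gcongr
    _ = _ := by
        rw [mul_one, inv_div, Real.div_rpow (by norm_num) (by positivity),
          Real.rpow_neg (by positivity), div_eq_mul_inv]

lemma continuous_gaussTransform (x : V) : Continuous (gaussTransform x) := by
  refine continuous_of_dominated (bound := fun _ => 1) (fun u => ?_)
    (fun u => ae_of_all _ fun v => ?_) (integrable_const _) (ae_of_all _ fun v => by fun_prop)
  · exact Continuous.aestronglyMeasurable (by fun_prop)
  · rw [norm_mul, Circle.norm_coe, Circle.norm_coe, one_mul]

lemma integrable_gaussTransform (x : V) (hd : 3 ≤ finrank ℝ V) : Integrable (gaussTransform x) := by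
  have hd' : (3 : ℝ) ≤ finrank ℝ V := by exact_mod_cast hd
  refine ((integrable_one_add_norm (E := ℝ) (μ := volume) (r := (finrank ℝ V : ℝ) / 2)
    (by simp only [Module.finrank_self, Nat.cast_one]; linarith)).const_mul _).mono'
    (continuous_gaussTransform x).aestronglyMeasurable (ae_of_all _ (norm_gaussTransform_le x))

lemma integrable_comp_norm_sq_mul_fourierChar_gaussMeasure (hd : 2 ≤ finrank ℝ V) {H : ℝ → ℂ}
    (hH : Integrable H) (x : V) :
    Integrable (fun v => H (‖v‖ ^ 2) * 𝐞 ⟪x, v⟫) (gaussMeasure V) := by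
  obtain ⟨C, h_map⟩ := exists_map_norm_sq_gaussMeasure_le hd
  exact (integrable_comp_of_map_le (φ := fun v => ‖v‖ ^ 2) (by fun_prop) h_map hH).mul_bdd (c := 1)
    (Continuous.aestronglyMeasurable (by fun_prop)) (ae_of_all _ fun _ => (Circle.norm_coe _).le)

theorem integral_comp_norm_sq_mul_fourierChar_gaussMeasure (hd : 3 ≤ finrank ℝ V) {H : ℝ → ℂ}
    (hH : Integrable H) (x : V) :
    ∫ v, H (‖v‖ ^ 2) * 𝐞 ⟪x, v⟫ ∂gaussMeasure V = ∫ u, 𝓕 H u * gaussTransform x u := by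
  obtain ⟨C, h_map⟩ := exists_map_norm_sq_gaussMeasure_le (V := V) (by lia)
  exact integral_comp_mul_eq_integral_fourier_mul (φ := fun v => ‖v‖ ^ 2) (by fun_prop) h_map
    (Continuous.aestronglyMeasurable (by fun_prop)) (fun _ => (Circle.norm_coe _).le)
    (integrable_gaussTransform x hd) hH

end GaussMeasure

section Amplitude

/-- The admissible amplitudes of oscillatory integrals in a variable `τ` depending on a parameter
`s`: smooth compactly supported functions of `(s, τ)`. -/
structure IsAmplitude (k : ℝ × ℝ → ℂ) : Prop where
  contDiff : ContDiff ℝ (⊤ : ℕ∞) k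
  hasCompactSupport : HasCompactSupport k

namespace IsAmplitude

variable {k : ℝ × ℝ → ℂ}

lemma fderiv_apply (hk : IsAmplitude k) (v : ℝ × ℝ) : IsAmplitude fun p => fderiv ℝ k p v where
  contDiff := (hk.contDiff.fderiv_right (m := (⊤ : ℕ∞)) le_rfl).clm_apply contDiff_const
  hasCompactSupport := hk.hasCompactSupport.fderiv_apply (𝕜 := ℝ) v

lemma mul_left (hk : IsAmplitude k) {f : ℝ × ℝ → ℂ} (hf : ContDiff ℝ (⊤ : ℕ∞) f) :
    IsAmplitude fun p => f p * k p where
  contDiff := hf.mul hk.contDiff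
  hasCompactSupport := hk.hasCompactSupport.mul_left

lemma ofReal_mul (hk : IsAmplitude k) {f : ℝ × ℝ → ℝ} (hf : ContDiff ℝ (⊤ : ℕ∞) f) :
    IsAmplitude fun p => (f p : ℂ) * k p :=
  hk.mul_left (Complex.ofRealCLM.contDiff.comp hf)

lemma exists_bound (hk : IsAmplitude k) :
    ∃ M : ℝ, 0 ≤ M ∧ ∀ p, ‖k p‖ ≤ M * (1 + p.2 ^ 2)⁻¹ := by
  have h := hk.ofReal_mul (f := fun p => 1 + p.2 ^ 2) (by fun_prop)
  obtain ⟨M, hM⟩ := h.hasCompactSupport.exists_bound_of_continuous h.contDiff.continuous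
  refine ⟨M, (norm_nonneg _).trans (hM 0), fun p => ?_⟩
  have h_pos : 0 < 1 + p.2 ^ 2 := by positivity
  have h_le := hM p
  rwa [norm_mul, Complex.norm_real, Real.norm_of_nonneg h_pos.le, ← le_div_iff₀' h_pos,
    div_eq_mul_inv] at h_le

lemma continuous_slice (hk : IsAmplitude k) (s : ℝ) : Continuous fun τ => k (s, τ) :=
  hk.contDiff.continuous.comp (by fun_prop)

lemma integrable_slice (hk : IsAmplitude k) (s : ℝ) : Integrable fun τ => k (s, τ) := by
  obtain ⟨M, -, hM⟩ := hk.exists_bound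
  exact (integrable_inv_one_add_sq.const_mul M).mono' (hk.continuous_slice s).aestronglyMeasurable
    (ae_of_all _ fun τ => hM (s, τ))

lemma exists_integral_norm_le (hk : IsAmplitude k) :
    ∃ M : ℝ, 0 ≤ M ∧ ∀ s, ∫ τ, ‖k (s, τ)‖ ≤ M := by
  obtain ⟨M, hM0, hM⟩ := hk.exists_bound
  refine ⟨M * π, by positivity, fun s => ?_⟩
  rw [← integral_univ_inv_one_add_sq, ← integral_const_mul]
  exact integral_mono (hk.integrable_slice s).norm (integrable_inv_one_add_sq.const_mul M)
    fun τ => hM (s, τ)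

lemma hasDerivAt_snd (hk : IsAmplitude k) (s τ : ℝ) :
    HasDerivAt (fun τ => k (s, τ)) (fderiv ℝ k (s, τ) (0, 1)) τ :=
  (hk.contDiff.differentiable (by simp) (s, τ)).hasFDerivAt.comp_hasDerivAt τ
    ((hasDerivAt_const τ s).prodMk (hasDerivAt_id τ))

lemma hasDerivAt_fst (hk : IsAmplitude k) (s τ : ℝ) :
    HasDerivAt (fun s => k (s, τ)) (fderiv ℝ k (s, τ) (1, 0)) s :=
  (hk.contDiff.differentiable (by simp) (s, τ)).hasFDerivAt.comp_hasDerivAt s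
    ((hasDerivAt_id s).prodMk (hasDerivAt_const s τ))

lemma norm_fourier_fderiv_slice (hk : IsAmplitude k) (s σ : ℝ) :
    ‖𝓕 (fun τ => fderiv ℝ k (s, τ) (0, 1)) σ‖ = 2 * π * |σ| * ‖𝓕 (fun τ => k (s, τ)) σ‖ := by
  have h_deriv : deriv (fun τ => k (s, τ)) = fun τ => fderiv ℝ k (s, τ) (0, 1) :=
    funext fun τ => (hk.hasDerivAt_snd s τ).deriv
  rw [← h_deriv, Real.fourier_deriv (hk.integrable_slice s)
    (fun τ => (hk.hasDerivAt_snd s τ).differentiableAt)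
    (h_deriv ▸ (hk.fderiv_apply (0, 1)).integrable_slice s), norm_smul]
  simp [abs_of_pos pi_pos]

lemma exists_norm_fourier_slice_le (hk : IsAmplitude k) :
    ∃ M : ℝ, 0 ≤ M ∧ ∀ s σ, ‖𝓕 (fun τ => k (s, τ)) σ‖ ≤ M * (1 + σ ^ 2)⁻¹ := by
  have hk₁ := hk.fderiv_apply (0, 1)
  obtain ⟨M, hM0, hM⟩ := hk.exists_integral_norm_le
  obtain ⟨M₂, hM₂0, hM₂⟩ := (hk₁.fderiv_apply (0, 1)).exists_integral_norm_le
  refine ⟨M + M₂, by positivity, fun s σ => ?_⟩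
  have h_zero : ‖𝓕 (fun τ => k (s, τ)) σ‖ ≤ M := (norm_fourier_le _ _).trans (hM s)
  have h_two : (2 * π) ^ 2 * (σ ^ 2 * ‖𝓕 (fun τ => k (s, τ)) σ‖) ≤ M₂ := by
    refine le_of_eq_of_le ?_ ((norm_fourier_le _ σ).trans (hM₂ s))
    rw [hk₁.norm_fourier_fderiv_slice, hk.norm_fourier_fderiv_slice, ← sq_abs σ]
    ring
  have h_pi : 1 ≤ (2 * π) ^ 2 := by nlinarith [Real.two_le_pi]
  rw [← div_eq_mul_inv, le_div_iff₀ (by positivity)]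
  nlinarith [mul_le_mul_of_nonneg_right h_pi
    (mul_nonneg (sq_nonneg σ) (norm_nonneg (𝓕 (fun τ => k (s, τ)) σ)))]

end IsAmplitude

end Amplitude

section OscillatoryIntegral

lemma hasDerivAt_fourierChar_comp {φ : ℝ → ℝ} {φ' x : ℝ} (h : HasDerivAt φ φ' x) :
    HasDerivAt (fun x => (𝐞 (φ x) : ℂ)) (2 * π * Complex.I * φ' * 𝐞 (φ x)) x := by
  refine ((Real.hasDerivAt_fourierChar (φ x)).scomp x h).congr_deriv ?_
  rw [Complex.real_smul]
  ring

/-- The oscillatory integral with amplitude `k(s, ·)`, linear frequency `t` and frequency `-u` along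
the parabola `l = τ² + s`. -/
def oscInt (k : ℝ × ℝ → ℂ) (s u t : ℝ) : ℂ := ∫ τ, k (s, τ) * 𝐞 (t * τ - u * (τ ^ 2 + s))

namespace IsAmplitude

variable {k : ℝ × ℝ → ℂ}

lemma integrable_oscInt (hk : IsAmplitude k) (s u t : ℝ) :
    Integrable fun τ => k (s, τ) * 𝐞 (t * τ - u * (τ ^ 2 + s)) :=
  (hk.integrable_slice s).mul_bdd (c := 1) (Continuous.aestronglyMeasurable (by fun_prop))
    (ae_of_all _ fun _ => (Circle.norm_coe _).le)

lemma oscInt_eq_integral_fourier_mul_gaussTransform (hk : IsAmplitude k) (s u t : ℝ) :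
    oscInt k s u t = ∫ σ, 𝓕 (fun τ => (rexp (π * τ ^ 2) : ℂ) * k (s, τ)) σ *
      (𝐞 (-(u * s)) * gaussTransform (t + σ) (-u)) := by
  have hκ := hk.ofReal_mul (f := fun p => rexp (π * p.2 ^ 2)) (by fun_prop)
  obtain ⟨M, -, hM⟩ := hκ.exists_norm_fourier_slice_le
  have h_fourier : Integrable (𝓕 fun τ => (rexp (π * τ ^ 2) : ℂ) * k (s, τ)) :=
    (integrable_inv_one_add_sq.const_mul M).mono'
      (continuous_fourier (hκ.integrable_slice s)).aestronglyMeasurable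
      (ae_of_all _ fun σ => hM s σ)
  have h_phase : Integrable (fun τ => (𝐞 (t * τ - u * (τ ^ 2 + s)) : ℂ)) (gaussMeasure ℝ) :=
    (integrable_const (1 : ℝ)).mono' (Continuous.aestronglyMeasurable (by fun_prop))
      (ae_of_all _ fun _ => (Circle.norm_coe _).le)
  have h_swap := integral_comp_mul_eq_integral_fourier_mul_of_continuous measurable_id h_phase
    (hκ.continuous_slice s) (hκ.integrable_slice s) h_fourier
  convert h_swap using 1
  · rw [integral_gaussMeasure, oscInt]
    congr 1 with τ
    rw [id, Real.norm_eq_abs, sq_abs, ← mul_assoc, ← mul_assoc, ← Complex.ofReal_mul,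
      ← Real.exp_add, neg_mul, neg_add_cancel, Real.exp_zero, Complex.ofReal_one, one_mul]
  · congr 1 with σ
    rw [gaussTransform, ← integral_const_mul]
    congr 2 with τ
    simp only [← Circle.coe_mul, ← AddChar.map_add_eq_mul]
    congr 2
    simp only [Real.norm_eq_abs, sq_abs, Real.inner_apply, id]
    ring

lemma exists_norm_oscInt_le (hk : IsAmplitude k) :
    ∃ C : ℝ, 0 ≤ C ∧ ∀ s u t, ‖oscInt k s u t‖ ≤ C * (1 + |u|) ^ (-(1 / 2) : ℝ) := by
  have hκ := hk.ofReal_mul (f := fun p => rexp (π * p.2 ^ 2)) (by fun_prop)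
  obtain ⟨M, hM0, hM⟩ := hκ.exists_norm_fourier_slice_le
  refine ⟨M * π * 2 ^ (1 / 2 : ℝ), by positivity, fun s u t => ?_⟩
  rw [hk.oscInt_eq_integral_fourier_mul_gaussTransform]
  calc _ ≤ ∫ σ : ℝ, M * (1 + σ ^ 2)⁻¹ * (2 ^ (1 / 2 : ℝ) * (1 + |u|) ^ (-(1 / 2) : ℝ)) := by
        refine norm_integral_le_of_norm_le
          ((integrable_inv_one_add_sq.const_mul M).mul_const _) (ae_of_all _ fun σ => ?_)
        rw [norm_mul, norm_mul, Circle.norm_coe, one_mul]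
        gcongr
        · exact hM s σ
        · simpa using norm_gaussTransform_le (t + σ) (-u)
    _ = _ := by
        rw [integral_mul_const, integral_const_mul, integral_univ_inv_one_add_sq]
        ring

lemma mul_oscInt (hk : IsAmplitude k) (s u t : ℝ) :
    t * oscInt k s u t = u * oscInt (fun p => (2 * p.2 : ℝ) * k p) s u t -
      oscInt (fun p => (2 * π * Complex.I)⁻¹ * fderiv ℝ k p (0, 1)) s u t := by
  have hk₁ : IsAmplitude fun p => ((2 * p.2 : ℝ) : ℂ) * k p := hk.ofReal_mul (by fun_prop)
  have hk₂ : IsAmplitude fun p => (2 * π * Complex.I)⁻¹ * fderiv ℝ k p (0, 1) :=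
    (hk.fderiv_apply _).mul_left contDiff_const
  have hi := (hk.integrable_oscInt s u t).const_mul (t : ℂ)
  have hi₁ := (hk₁.integrable_oscInt s u t).const_mul (u : ℂ)
  have hi₂ := hk₂.integrable_oscInt s u t
  have hi₀₁ : Integrable fun τ => t * (k (s, τ) * 𝐞 (t * τ - u * (τ ^ 2 + s))) -
      u * ((2 * τ : ℝ) * k (s, τ) * 𝐞 (t * τ - u * (τ ^ 2 + s))) := hi.sub hi₁
  have h_deriv : ∀ τ, HasDerivAt
      (fun τ => (2 * π * Complex.I)⁻¹ * (k (s, τ) * 𝐞 (t * τ - u * (τ ^ 2 + s))))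
      (t * (k (s, τ) * 𝐞 (t * τ - u * (τ ^ 2 + s))) -
        u * ((2 * τ : ℝ) * k (s, τ) * 𝐞 (t * τ - u * (τ ^ 2 + s))) +
        (2 * π * Complex.I)⁻¹ * fderiv ℝ k (s, τ) (0, 1) * 𝐞 (t * τ - u * (τ ^ 2 + s))) τ := by
    intro τ
    have h_phase : HasDerivAt (fun τ : ℝ => t * τ - u * (τ ^ 2 + s)) (t - u * (2 * τ)) τ := by
      refine (((hasDerivAt_id τ).const_mul t).fun_sub
        (((hasDerivAt_pow 2 τ).add_const s).const_mul u)).congr_deriv ?_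
      simp
    refine (((hk.hasDerivAt_snd s τ).mul (hasDerivAt_fourierChar_comp h_phase)).const_mul
      (2 * π * Complex.I)⁻¹).congr_deriv ?_
    have := Complex.two_pi_I_ne_zero
    push_cast
    field_simp
    ring
  have h_zero := integral_eq_zero_of_hasDerivAt_of_integrable h_deriv (hi₀₁.add hi₂)
    ((hk.integrable_oscInt s u t).const_mul _)
  rw [integral_add hi₀₁ hi₂, integral_sub hi hi₁, integral_const_mul,
    integral_const_mul] at h_zero
  simp only [oscInt]
  linear_combination h_zero

lemma hasDerivAt_oscInt (hk : IsAmplitude k) (s u t : ℝ) :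
    HasDerivAt (fun s => oscInt k s u t)
      (oscInt (fun p => fderiv ℝ k p (1, 0)) s u t - 2 * π * Complex.I * u * oscInt k s u t) s := by
  have hk' := hk.fderiv_apply (1, 0)
  obtain ⟨M, -, hM⟩ := hk.exists_bound
  obtain ⟨M', -, hM'⟩ := hk'.exists_bound
  have h_int := (hk'.integrable_oscInt s u t).sub
    ((hk.integrable_oscInt s u t).const_mul (2 * π * Complex.I * u))
  have h_deriv : ∀ s τ, HasDerivAt (fun s => k (s, τ) * 𝐞 (t * τ - u * (τ ^ 2 + s)))
      (fderiv ℝ k (s, τ) (1, 0) * 𝐞 (t * τ - u * (τ ^ 2 + s)) -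
        2 * π * Complex.I * u * (k (s, τ) * 𝐞 (t * τ - u * (τ ^ 2 + s)))) s := by
    intro s τ
    have h_phase : HasDerivAt (fun s : ℝ => t * τ - u * (τ ^ 2 + s)) (-u) s := by
      simpa using (((hasDerivAt_id s).const_add (τ ^ 2)).const_mul u).const_sub (t * τ)
    refine ((hk.hasDerivAt_fst s τ).mul (hasDerivAt_fourierChar_comp h_phase)).congr_deriv ?_
    push_cast
    ring
  have h := (hasDerivAt_integral_of_dominated_loc_of_deriv_le (s := Set.univ)
    (bound := fun τ => M' * (1 + τ ^ 2)⁻¹ + 2 * π * |u| * (M * (1 + τ ^ 2)⁻¹)) univ_mem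
    (.of_forall fun s => (hk.integrable_oscInt s u t).aestronglyMeasurable)
    (hk.integrable_oscInt s u t) h_int.aestronglyMeasurable
    (ae_of_all _ fun τ s _ => (norm_sub_le _ _).trans ?_)
    ((integrable_inv_one_add_sq.const_mul M').add
      ((integrable_inv_one_add_sq.const_mul M).const_mul _))
    (ae_of_all _ fun τ s _ => h_deriv s τ)).2
  · rwa [integral_sub (hk'.integrable_oscInt s u t)
      ((hk.integrable_oscInt s u t).const_mul _), integral_const_mul] at h
  · simp only [norm_mul, Circle.norm_coe, mul_one, Complex.norm_I, Complex.norm_real,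
      Complex.norm_ofNat, Real.norm_eq_abs, abs_of_pos pi_pos]
    gcongr
    exacts [hM' (s, τ), hM (s, τ)]

end IsAmplitude

end OscillatoryIntegral

section Decay

lemma exists_pow_mul_norm_le_of_recursion {ι α E : Type*} [NormedAddCommGroup E] {P : ι → Prop}
    {I : ι → α → E} {A B W : α → ℝ} (hA : ∀ x, 0 ≤ A x) (hB : ∀ x, 0 ≤ B x) (hW : ∀ x, 0 ≤ W x)
    (h_base : ∀ k, P k → ∃ C : ℝ, 0 ≤ C ∧ ∀ x, ‖I k x‖ ≤ C * W x)
    (h_step : ∀ k, P k → ∃ k₁ k₂, P k₁ ∧ P k₂ ∧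
      ∀ x, A x * ‖I k x‖ ≤ B x * ‖I k₁ x‖ + ‖I k₂ x‖)
    (N : ℕ) {k : ι} (hk : P k) :
    ∃ C : ℝ, 0 ≤ C ∧ ∀ x, (1 + A x) ^ N * ‖I k x‖ ≤ C * ((1 + B x) ^ N * W x) := by
  induction N generalizing k with
  | zero => simpa using h_base k hk
  | succ N ih =>
    obtain ⟨k₁, k₂, hk₁, hk₂, h_le⟩ := h_step k hk
    obtain ⟨C₀, hC₀, h₀⟩ := ih hk
    obtain ⟨C₁, hC₁, h₁⟩ := ih hk₁
    obtain ⟨C₂, hC₂, h₂⟩ := ih hk₂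
    refine ⟨C₀ + C₁ + C₂, by positivity, fun x => ?_⟩
    have hA := hA x
    have hB := hB x
    have hW := hW x
    calc (1 + A x) ^ (N + 1) * ‖I k x‖
        = (1 + A x) ^ N * ‖I k x‖ + (1 + A x) ^ N * (A x * ‖I k x‖) := by ring
      _ ≤ (1 + A x) ^ N * ‖I k x‖ + (1 + A x) ^ N * (B x * ‖I k₁ x‖ + ‖I k₂ x‖) := by
          gcongr
          exact h_le x
      _ = (1 + A x) ^ N * ‖I k x‖ + B x * ((1 + A x) ^ N * ‖I k₁ x‖) +
          (1 + A x) ^ N * ‖I k₂ x‖ := by ring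
      _ ≤ C₀ * ((1 + B x) ^ N * W x) + B x * (C₁ * ((1 + B x) ^ N * W x)) +
          C₂ * ((1 + B x) ^ N * W x) := by
          exact add_le_add_three (h₀ x) (mul_le_mul_of_nonneg_left (h₁ x) hB) (h₂ x)
      _ ≤ (C₀ + C₁ + C₂) * (1 + B x) * ((1 + B x) ^ N * W x) := by
          rw [← mul_assoc (B x), ← add_mul, ← add_mul]
          gcongr
          nlinarith [mul_nonneg hC₀ hB, mul_nonneg hC₂ hB]
      _ = _ := by ring

/-- An amplitude supported away from the critical line `τ = 0` of the phase `τ² + s`. -/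
structure IsOffAxisAmplitude (k : ℝ × ℝ → ℂ) : Prop extends IsAmplitude k where
  snd_ne_zero : ∀ p ∈ tsupport k, p.2 ≠ 0

namespace IsOffAxisAmplitude

variable {k : ℝ × ℝ → ℂ}

lemma fderiv_apply (hk : IsOffAxisAmplitude k) (v : ℝ × ℝ) :
    IsOffAxisAmplitude fun p => fderiv ℝ k p v where
  toIsAmplitude := hk.toIsAmplitude.fderiv_apply v
  snd_ne_zero _ hp := hk.snd_ne_zero _ (tsupport_fderiv_apply_subset ℝ v hp)

lemma mul_left (hk : IsOffAxisAmplitude k) {f : ℝ × ℝ → ℂ}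
    (hf : ∀ p : ℝ × ℝ, p.2 ≠ 0 → ContDiffAt ℝ (⊤ : ℕ∞) f p) :
    IsOffAxisAmplitude fun p => f p * k p where
  contDiff := (contMDiff_of_tsupport fun p hp => ((hf p (hk.snd_ne_zero p
    (tsupport_mul_subset_right hp))).mul hk.contDiff.contDiffAt).contMDiffAt).contDiff
  hasCompactSupport := hk.hasCompactSupport.mul_left
  snd_ne_zero p hp := hk.snd_ne_zero p (tsupport_mul_subset_right hp)

lemma inv_two_snd_mul (hk : IsOffAxisAmplitude k) :
    IsOffAxisAmplitude fun p => ((2 * p.2)⁻¹ : ℝ) * k p :=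
  hk.mul_left fun p hp => Complex.ofRealCLM.contDiff.contDiffAt.comp p
    ((contDiffAt_const.mul contDiffAt_snd).inv (mul_ne_zero two_ne_zero hp))

lemma two_snd_mul_inv_two_snd_mul (hk : IsOffAxisAmplitude k) :
    (fun p : ℝ × ℝ => ((2 * p.2 : ℝ) : ℂ) * (((2 * p.2)⁻¹ : ℝ) * k p)) = k := by
  ext p
  by_cases hp : p.2 = 0
  · rw [image_eq_zero_of_notMem_tsupport fun h => hk.snd_ne_zero p h hp, mul_zero, mul_zero]
  · rw [← mul_assoc, ← Complex.ofReal_mul, mul_inv_cancel₀ (mul_ne_zero two_ne_zero hp),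
      Complex.ofReal_one, one_mul]

end IsOffAxisAmplitude

namespace IsAmplitude

variable {k : ℝ × ℝ → ℂ}

lemma abs_mul_norm_oscInt_le (hk : IsAmplitude k) (s u t : ℝ) :
    |t| * ‖oscInt k s u t‖ ≤ |u| * ‖oscInt (fun p => (2 * p.2 : ℝ) * k p) s u t‖ +
      ‖oscInt (fun p => (2 * π * Complex.I)⁻¹ * fderiv ℝ k p (0, 1)) s u t‖ := by
  have h := (congrArg norm (hk.mul_oscInt s u t)).le.trans (norm_sub_le _ _)
  simpa only [norm_mul, Complex.norm_real, Real.norm_eq_abs] using h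

lemma exists_norm_oscInt_le_div_pow (hk : IsAmplitude k) (N : ℕ) :
    ∃ C : ℝ, 0 ≤ C ∧ ∀ s u t, ‖oscInt k s u t‖ ≤
      C * (((1 + |u|) / (1 + |t|)) ^ N * (1 + |u|) ^ (-(1 / 2) : ℝ)) := by
  obtain ⟨C, hC, h⟩ := exists_pow_mul_norm_le_of_recursion
    (I := fun k (x : ℝ × ℝ × ℝ) => oscInt k x.1 x.2.1 x.2.2) (A := fun x => |x.2.2|)
    (B := fun x => |x.2.1|) (W := fun x => (1 + |x.2.1|) ^ (-(1 / 2) : ℝ))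
    (fun _ => abs_nonneg _) (fun _ => abs_nonneg _) (fun _ => by positivity)
    (fun k hk => hk.exists_norm_oscInt_le.imp fun C h => ⟨h.1, fun x => h.2 _ _ _⟩)
    (fun k hk => ⟨_, _, hk.ofReal_mul (by fun_prop), (hk.fderiv_apply _).mul_left contDiff_const,
      fun x => hk.abs_mul_norm_oscInt_le _ _ _⟩) N hk
  refine ⟨C, hC, fun s u t => ?_⟩
  rw [div_pow, div_mul_eq_mul_div, ← mul_div_assoc, le_div_iff₀' (by positivity)]
  exact h (s, u, t)

end IsAmplitude

namespace IsOffAxisAmplitude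

variable {k : ℝ × ℝ → ℂ}

lemma abs_mul_norm_oscInt_le (hk : IsOffAxisAmplitude k) (s u t : ℝ) :
    |u| * ‖oscInt k s u t‖ ≤ |t| * ‖oscInt (fun p => ((2 * p.2)⁻¹ : ℝ) * k p) s u t‖ +
      ‖oscInt (fun p => (2 * π * Complex.I)⁻¹ *
        fderiv ℝ (fun p => ((2 * p.2)⁻¹ : ℝ) * k p) p (0, 1)) s u t‖ := by
  have h := hk.inv_two_snd_mul.mul_oscInt s u t
  rw [hk.two_snd_mul_inv_two_snd_mul, eq_sub_iff_add_eq, eq_comm] at h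
  simpa only [norm_mul, Complex.norm_real, Real.norm_eq_abs]
    using (congrArg norm h).le.trans (norm_add_le _ _)

lemma exists_norm_oscInt_le_div_pow (hk : IsOffAxisAmplitude k) (N : ℕ) :
    ∃ C : ℝ, 0 ≤ C ∧ ∀ s u t, ‖oscInt k s u t‖ ≤
      C * (((1 + |t|) / (1 + |u|)) ^ N * (1 + |u|) ^ (-(1 / 2) : ℝ)) := by
  obtain ⟨C, hC, h⟩ := exists_pow_mul_norm_le_of_recursion
    (I := fun k (x : ℝ × ℝ × ℝ) => oscInt k x.1 x.2.1 x.2.2) (A := fun x => |x.2.1|)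
    (B := fun x => |x.2.2|) (W := fun x => (1 + |x.2.1|) ^ (-(1 / 2) : ℝ))
    (fun _ => abs_nonneg _) (fun _ => abs_nonneg _) (fun _ => by positivity)
    (fun k (hk : IsOffAxisAmplitude k) =>
      hk.exists_norm_oscInt_le.imp fun C h => ⟨h.1, fun x => h.2 _ _ _⟩)
    (fun k hk => ⟨_, _, hk.inv_two_snd_mul,
      (hk.inv_two_snd_mul.fderiv_apply _).mul_left fun _ _ => contDiffAt_const,
      fun x => hk.abs_mul_norm_oscInt_le _ _ _⟩) N hk
  refine ⟨C, hC, fun s u t => ?_⟩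
  rw [div_pow, div_mul_eq_mul_div, ← mul_div_assoc, le_div_iff₀' (by positivity)]
  exact h (s, u, t)

end IsOffAxisAmplitude

end Decay

section FrequencyBand

/-- The weight expressing localization to frequencies `|u| ≈ |t|`: decay of order `N` for
`|u| ≪ |t|` and of order `p` for `|u| ≫ |t|`. -/
def bandWeight (N p : ℕ) (u t : ℝ) : ℝ :=
  min (((1 + |u|) / (1 + |t|)) ^ N) (((1 + |t|) / (1 + |u|)) ^ p)

lemma bandWeight_nonneg (N p : ℕ) (u t : ℝ) : 0 ≤ bandWeight N p u t :=
  le_min (by positivity) (by positivity)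

lemma min_pow_mul_rpow_le {ρ a : ℝ} {N p : ℕ} (hρ : 0 < ρ) (hN : 0 ≤ a + N) (hp : a + 2 ≤ p) :
    min (ρ ^ N) (ρ⁻¹ ^ p) * ρ ^ a ≤ 2 * (1 + ρ ^ 2)⁻¹ := by
  rw [← div_eq_mul_inv, le_div_iff₀ (by positivity)]
  rcases le_total ρ 1 with h_le | h_le
  · have h_one : min (ρ ^ N) (ρ⁻¹ ^ p) * ρ ^ a ≤ 1 := by
      refine (mul_le_mul_of_nonneg_right (min_le_left _ _) (by positivity)).trans ?_
      rw [← Real.rpow_natCast, ← Real.rpow_add hρ]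
      exact Real.rpow_le_one hρ.le h_le (by linarith)
    nlinarith
  · have h_sq : min (ρ ^ N) (ρ⁻¹ ^ p) * ρ ^ a ≤ (ρ ^ 2)⁻¹ := by
      refine (mul_le_mul_of_nonneg_right (min_le_right _ _) (by positivity)).trans ?_
      rw [inv_pow, ← Real.rpow_natCast, ← Real.rpow_neg hρ.le, ← Real.rpow_add hρ,
        ← Real.rpow_two, ← Real.rpow_neg hρ.le]
      exact Real.rpow_le_rpow_of_exponent_le h_le (by linarith)
    calc _ ≤ (ρ ^ 2)⁻¹ * (1 + ρ ^ 2) := by gcongr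
      _ = (ρ ^ 2)⁻¹ + 1 := by field_simp
      _ ≤ 2 := by linarith [inv_le_one_of_one_le₀ (one_le_pow₀ h_le (n := 2))]

lemma bandWeight_mul_rpow_le {a : ℝ} {N p : ℕ} (hN : 0 ≤ a + N) (hp : a + 2 ≤ p) (u t : ℝ) :
    bandWeight N p u t * (1 + |u|) ^ a ≤
      2 * (1 + |t|) ^ a * (1 + (u / (1 + |t|)) ^ 2)⁻¹ := by
  have hT : 0 < 1 + |t| := by positivity
  have hρ : 0 < (1 + |u|) / (1 + |t|) := by positivity
  calc _ = (1 + |t|) ^ a * (min (((1 + |u|) / (1 + |t|)) ^ N) (((1 + |u|) / (1 + |t|))⁻¹ ^ p) *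
        ((1 + |u|) / (1 + |t|)) ^ a) := by
        rw [bandWeight, inv_div, Real.div_rpow (by positivity) hT.le]
        field_simp
    _ ≤ (1 + |t|) ^ a * (2 * (1 + ((1 + |u|) / (1 + |t|)) ^ 2)⁻¹) := by
        exact mul_le_mul_of_nonneg_left (min_pow_mul_rpow_le hρ hN hp) (by positivity)
    _ ≤ (1 + |t|) ^ a * (2 * (1 + (u / (1 + |t|)) ^ 2)⁻¹) := by
        rw [← sq_abs (u / _), abs_div, abs_of_pos hT]
        gcongr
        linarith
    _ = _ := by ring

lemma norm_integral_le_of_le_bandWeight {E : Type*} [NormedAddCommGroup E] [NormedSpace ℝ E]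
    {F : ℝ → E} {C a t : ℝ} {N p : ℕ} (hC : 0 ≤ C) (hN : 0 ≤ a + N) (hp : a + 2 ≤ p)
    (hF : ∀ u, ‖F u‖ ≤ C * (bandWeight N p u t * (1 + |u|) ^ a)) :
    ‖∫ u, F u‖ ≤ 2 * π * C * (1 + |t|) ^ (a + 1) := by
  have hT : 0 < 1 + |t| := by positivity
  calc ‖∫ u, F u‖ ≤ ∫ u, C * (2 * (1 + |t|) ^ a * (1 + (u / (1 + |t|)) ^ 2)⁻¹) :=
        norm_integral_le_of_norm_le
          (((integrable_inv_one_add_sq.comp_div hT.ne').const_mul _).const_mul _)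
          (ae_of_all _ fun u => (hF u).trans
            (mul_le_mul_of_nonneg_left (bandWeight_mul_rpow_le hN hp u t) hC))
    _ = _ := by
        rw [integral_const_mul, integral_const_mul,
          Measure.integral_comp_div (fun x : ℝ => (1 + x ^ 2)⁻¹), integral_univ_inv_one_add_sq,
          abs_of_pos hT, Real.rpow_add_one hT.ne', smul_eq_mul]
        ring

lemma IsAmplitude.exists_norm_oscInt_le_bandWeight {k : ℝ × ℝ → ℂ} (hk : IsAmplitude k) (N : ℕ) :
    ∃ C : ℝ, 0 ≤ C ∧ ∀ s u t, ‖oscInt k s u t‖ ≤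
      C * (bandWeight N 0 u t * (1 + |u|) ^ (-(1 / 2) : ℝ)) := by
  obtain ⟨C, hC, h⟩ := hk.exists_norm_oscInt_le_div_pow N
  obtain ⟨D, -, h'⟩ := hk.exists_norm_oscInt_le
  refine ⟨max C D, hC.trans (le_max_left _ _), fun s u t => ?_⟩
  rw [bandWeight, pow_zero, min_mul_of_nonneg _ _ (by positivity), one_mul,
    mul_min_of_nonneg _ _ (hC.trans (le_max_left _ _)), le_min_iff]
  exact ⟨(h s u t).trans (by gcongr; exact le_max_left _ _),
    (h' s u t).trans (by gcongr; exact le_max_right _ _)⟩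

lemma IsOffAxisAmplitude.exists_norm_oscInt_le_bandWeight {k : ℝ × ℝ → ℂ}
    (hk : IsOffAxisAmplitude k) (N p : ℕ) :
    ∃ C : ℝ, 0 ≤ C ∧ ∀ s u t, ‖oscInt k s u t‖ ≤
      C * (bandWeight N p u t * (1 + |u|) ^ (-(1 / 2) : ℝ)) := by
  obtain ⟨C, hC, h⟩ := hk.toIsAmplitude.exists_norm_oscInt_le_div_pow N
  obtain ⟨D, -, h'⟩ := hk.exists_norm_oscInt_le_div_pow p
  refine ⟨max C D, hC.trans (le_max_left _ _), fun s u t => ?_⟩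
  rw [bandWeight, min_mul_of_nonneg _ _ (by positivity),
    mul_min_of_nonneg _ _ (hC.trans (le_max_left _ _)), le_min_iff]
  exact ⟨(h s u t).trans (by gcongr; exact le_max_left _ _),
    (h' s u t).trans (by gcongr; exact le_max_right _ _)⟩

end FrequencyBand

section SecondDifference

/-- The symmetric second difference of `f` at the origin with step `s`. -/
def secondDifference (f : ℝ → ℂ) (s : ℝ) : ℂ := f s - 2 * f 0 + f (-s)

lemma norm_secondDifference_le {f : ℝ → ℂ} {K : ℝ} (hf : ∀ s, ‖f s‖ ≤ K) (s : ℝ) :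
    ‖secondDifference f s‖ ≤ 4 * K := by
  calc _ ≤ ‖f s‖ + ‖2 * f 0‖ + ‖f (-s)‖ := norm_add_le_of_le (norm_sub_le _ _) le_rfl
    _ ≤ K + 2 * K + K := by
        rw [norm_mul, Complex.norm_ofNat]
        gcongr <;> apply hf
    _ = 4 * K := by ring

lemma norm_secondDifference_le_of_hasDerivAt {f f' f'' : ℝ → ℂ} {K : ℝ}
    (hf : ∀ s, HasDerivAt f (f' s) s) (hf' : ∀ s, HasDerivAt f' (f'' s) s)
    (hK : ∀ s, ‖f'' s‖ ≤ K) (s : ℝ) : ‖secondDifference f s‖ ≤ 2 * K * s ^ 2 := by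
  have hK0 : 0 ≤ K := (norm_nonneg _).trans (hK 0)
  have h_odd : ∀ r, ‖f' r - f' (-r)‖ ≤ 2 * K * |r| := fun r => by
    have h := Convex.norm_image_sub_le_of_norm_hasDerivWithin_le (x := -r) (y := r)
      (fun x _ => (hf' x).hasDerivWithinAt) (fun x _ => hK x) convex_univ trivial trivial
    rw [Real.norm_eq_abs, sub_neg_eq_add, ← two_mul, abs_mul, abs_two] at h
    linarith
  have h_even : ∀ r, HasDerivAt (fun r => f r + f (-r)) (f' r - f' (-r)) r := fun r => by
    refine ((hf r).add ((hf (-r)).scomp r (hasDerivAt_neg r))).congr_deriv ?_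
    rw [neg_one_smul, sub_eq_add_neg]
  have h := Convex.norm_image_sub_le_of_norm_hasDerivWithin_le (s := Set.Icc (-|s|) |s|)
    (x := 0) (y := s) (C := 2 * K * |s|) (fun x _ => (h_even x).hasDerivWithinAt)
    (fun x hx => (h_odd x).trans (mul_le_mul_of_nonneg_left (abs_le.2 hx) (by positivity)))
    (convex_Icc _ _) (by simp) (abs_le.1 le_rfl)
  rw [sub_zero, Real.norm_eq_abs, mul_assoc, ← sq, sq_abs, neg_zero] at h
  convert! h using 2
  rw [secondDifference]
  ring

lemma IsAmplitude.exists_norm_secondDifference_oscInt_le {k : ℝ × ℝ → ℂ} (hk : IsAmplitude k)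
    {W : ℝ → ℝ → ℝ} {C₀ C₁ C₂ : ℝ} (hC₀ : 0 ≤ C₀) (hC₁ : 0 ≤ C₁) (hC₂ : 0 ≤ C₂)
    (hW : ∀ u t, 0 ≤ W u t)
    (h₀ : ∀ s u t, ‖oscInt k s u t‖ ≤ C₀ * W u t)
    (h₁ : ∀ s u t, ‖oscInt (fun p => fderiv ℝ k p (1, 0)) s u t‖ ≤ C₁ * W u t)
    (h₂ : ∀ s u t, ‖oscInt (fun p => fderiv ℝ (fun p => fderiv ℝ k p (1, 0)) p (1, 0)) s u t‖ ≤
      C₂ * W u t) :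
    ∃ C : ℝ, 0 ≤ C ∧ ∀ s u t, ‖secondDifference (fun s => oscInt k s u t) s‖ ≤
      C * s ^ 2 * ((1 + |u|) ^ 2 * W u t) := by
  refine ⟨2 * (C₂ + 4 * π * C₁ + 4 * π ^ 2 * C₀), by positivity, fun s u t => ?_⟩
  have hk' := hk.fderiv_apply (1, 0)
  have hu := abs_nonneg u
  have hW := hW u t
  have h_norm : ‖(2 * π * Complex.I * u : ℂ)‖ = 2 * π * |u| := by simp [abs_of_pos pi_pos]
  refine (norm_secondDifference_le_of_hasDerivAt (fun s => hk.hasDerivAt_oscInt s u t)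
    (fun s => (hk'.hasDerivAt_oscInt s u t).sub
      ((hk.hasDerivAt_oscInt s u t).const_mul (2 * π * Complex.I * u)))
    (K := (C₂ + 4 * π * C₁ + 4 * π ^ 2 * C₀) * ((1 + |u|) ^ 2 * W u t))
    (fun s => ?_) s).trans_eq (by ring)
  calc _ ≤ (C₂ * W u t + 2 * π * |u| * (C₁ * W u t)) +
        2 * π * |u| * (C₁ * W u t + 2 * π * |u| * (C₀ * W u t)) := by
        refine norm_sub_le_of_le (norm_sub_le_of_le (h₂ s u t) ?_) ?_
        · rw [norm_mul, h_norm]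
          exact mul_le_mul_of_nonneg_left (h₁ s u t) (by positivity)
        · rw [norm_mul, h_norm]
          refine mul_le_mul_of_nonneg_left (norm_sub_le_of_le (h₁ s u t) ?_) (by positivity)
          rw [norm_mul, h_norm]
          exact mul_le_mul_of_nonneg_left (h₀ s u t) (by positivity)
    _ = (C₂ * 1 + 4 * π * C₁ * |u| + 4 * π ^ 2 * C₀ * |u| ^ 2) * W u t := by ring
    _ ≤ (C₂ * (1 + |u|) ^ 2 + 4 * π * C₁ * (1 + |u|) ^ 2 + 4 * π ^ 2 * C₀ * (1 + |u|) ^ 2) *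
        W u t := by gcongr <;> nlinarith
    _ = _ := by ring

lemma IsOffAxisAmplitude.exists_norm_secondDifference_oscInt_le {k : ℝ × ℝ → ℂ}
    (hk : IsOffAxisAmplitude k) (N p : ℕ) :
    ∃ C : ℝ, 0 ≤ C ∧ ∀ s u t, ‖secondDifference (fun s => oscInt k s u t) s‖ ≤
      C * s ^ 2 * ((1 + |u|) ^ 2 * (bandWeight N p u t * (1 + |u|) ^ (-(1 / 2) : ℝ))) := by
  have hk' := hk.fderiv_apply (1, 0)
  obtain ⟨C₀, hC₀, h₀⟩ := hk.exists_norm_oscInt_le_bandWeight N p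
  obtain ⟨C₁, hC₁, h₁⟩ := hk'.exists_norm_oscInt_le_bandWeight N p
  obtain ⟨C₂, hC₂, h₂⟩ := (hk'.fderiv_apply (1, 0)).exists_norm_oscInt_le_bandWeight N p
  exact hk.toIsAmplitude.exists_norm_secondDifference_oscInt_le hC₀ hC₁ hC₂
    (fun u t => mul_nonneg (bandWeight_nonneg N p u t) (by positivity)) h₀ h₁ h₂

end SecondDifference

section FrequencyIntegral

variable {V : Type*} [NormedAddCommGroup V] [InnerProductSpace ℝ V] [FiniteDimensional ℝ V]
  [MeasurableSpace V] [BorelSpace V] {k : ℝ × ℝ → ℂ}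

lemma norm_integral_mul_gaussTransform_le {F : ℝ → ℂ} {C b t : ℝ} {N p : ℕ} (hC : 0 ≤ C)
    (hN : (finrank ℝ V : ℝ) / 2 ≤ b + N) (hp : b + 2 ≤ finrank ℝ V / 2 + p)
    (hF : ∀ u, ‖F u‖ ≤ C * (bandWeight N p u t * (1 + |u|) ^ b)) (x : V) :
    ‖∫ u, F u * gaussTransform x u‖ ≤
      2 * π * (C * 2 ^ ((finrank ℝ V : ℝ) / 2)) * (1 + |t|) ^ (b - finrank ℝ V / 2 + 1) := by
  refine norm_integral_le_of_le_bandWeight (by positivity) (N := N) (p := p) (by linarith)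
    (by linarith) fun u => ?_
  have := bandWeight_nonneg N p u t
  calc _ ≤ C * (bandWeight N p u t * (1 + |u|) ^ b) *
        (2 ^ ((finrank ℝ V : ℝ) / 2) * (1 + |u|) ^ (-((finrank ℝ V : ℝ) / 2))) := by
        rw [norm_mul]
        exact mul_le_mul (hF u) (norm_gaussTransform_le x u) (norm_nonneg _) (by positivity)
    _ = _ := by
        rw [sub_eq_add_neg, Real.rpow_add (by positivity)]
        ring

lemma IsAmplitude.exists_norm_integral_secondDifference_le (hk : IsAmplitude k)
    (hd : 3 ≤ finrank ℝ V) :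
    ∃ C : ℝ, 0 ≤ C ∧ ∀ (x : V) (s t : ℝ),
      ‖∫ u, secondDifference (fun s => oscInt k s u t) s * gaussTransform x u‖ ≤
        C * (1 + |t|) ^ ((1 - finrank ℝ V : ℝ) / 2) := by
  have hd' : (3 : ℝ) ≤ finrank ℝ V := by exact_mod_cast hd
  obtain ⟨C, hC, h⟩ := hk.exists_norm_oscInt_le_bandWeight (finrank ℝ V)
  refine ⟨2 * π * (4 * C * 2 ^ ((finrank ℝ V : ℝ) / 2)), by positivity, fun x s t => ?_⟩
  convert! norm_integral_mul_gaussTransform_le (b := -(1 / 2)) (N := finrank ℝ V) (p := 0)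
    (C := 4 * C) (t := t) (by positivity) (by linarith) (by push_cast; linarith) (fun u => ?_) x
    using 2
  · ring_nf
  · exact (norm_secondDifference_le (fun s => h s u t) s).trans_eq (by ring)

variable (V) in
lemma IsOffAxisAmplitude.exists_norm_integral_secondDifference_le (hk : IsOffAxisAmplitude k) :
    ∃ C : ℝ, 0 ≤ C ∧ ∀ (x : V) (s t : ℝ),
      ‖∫ u, secondDifference (fun s => oscInt k s u t) s * gaussTransform x u‖ ≤
        C * (1 + |t|) ^ ((1 - finrank ℝ V : ℝ) / 2) * ((1 + |t|) ^ 2 * s ^ 2) := by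
  obtain ⟨C, hC, h⟩ := hk.exists_norm_secondDifference_oscInt_le (finrank ℝ V) 4
  refine ⟨2 * π * (C * 2 ^ ((finrank ℝ V : ℝ) / 2)), by positivity, fun x s t => ?_⟩
  have h_le := norm_integral_mul_gaussTransform_le (V := V) (b := 3 / 2) (N := finrank ℝ V) (p := 4)
    (C := C * s ^ 2) (t := t) (F := fun u => secondDifference (fun s => oscInt k s u t) s)
    (by positivity) (by linarith [(finrank ℝ V).cast_nonneg (α := ℝ)])
    (by push_cast; linarith [(finrank ℝ V).cast_nonneg (α := ℝ)]) (fun u => ?_) x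
  · refine h_le.trans_eq ?_
    have h_exp : (3 / 2 - finrank ℝ V / 2 + 1 : ℝ) = (1 - finrank ℝ V) / 2 + 2 := by ring
    rw [h_exp, Real.rpow_add (by positivity), Real.rpow_two]
    ring
  · refine (h s u t).trans_eq ?_
    rw [mul_left_comm ((1 + |u|) ^ 2), ← Real.rpow_two (1 + |u|), ← Real.rpow_add (by positivity)]
    norm_num

/-- Cutting off in `s` removes the critical line from the support of an amplitude that vanishes
near the origin. -/
lemma IsAmplitude.exists_isOffAxisAmplitude_eqOn (hk : IsAmplitude k) (hk0 : k =ᶠ[𝓝 0] 0) :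
    ∃ δ > 0, ∃ k₀, IsOffAxisAmplitude k₀ ∧ ∀ s, |s| < δ → ∀ τ, k₀ (s, τ) = k (s, τ) := by
  obtain ⟨δ, hδ, h_ball⟩ := Metric.eventually_nhds_iff_ball.1 hk0.eventually_nhds
  let χ : ContDiffBump (0 : ℝ) := ⟨δ / 4, δ / 2, by positivity, by linarith⟩
  have h_amp : IsAmplitude fun p => (χ p.1 : ℂ) * k p :=
    hk.ofReal_mul (χ.contDiff.comp contDiff_fst)
  refine ⟨δ / 4, by positivity, _, ⟨h_amp, fun p hp hp2 => ?_⟩, fun s hs τ => ?_⟩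
  · have h_fst : p.1 ∈ tsupport χ := by
      have h_subset : tsupport (fun p : ℝ × ℝ => (χ p.1 : ℂ) * k p) ⊆ Prod.fst ⁻¹' tsupport χ :=
        closure_minimal (fun q hq => subset_tsupport _ (by simpa using left_ne_zero_of_mul hq))
          ((isClosed_tsupport χ).preimage continuous_fst)
      exact h_subset hp
    rw [χ.tsupport_eq, mem_closedBall_zero_iff, Real.norm_eq_abs] at h_fst
    have h_mem : p ∈ Metric.ball (0 : ℝ × ℝ) δ := by
      rw [mem_ball_zero_iff, Prod.norm_def, hp2, norm_zero, Real.norm_eq_abs]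
      exact max_lt (h_fst.trans_lt (half_lt_self hδ)) hδ
    exact notMem_tsupport_iff_eventuallyEq.2 (h_ball p h_mem) (tsupport_mul_subset_right hp)
  · rw [χ.one_of_mem_closedBall (by simpa using hs.le), Complex.ofReal_one, one_mul]

theorem IsAmplitude.exists_norm_integral_secondDifference_le_mul_min (hk : IsAmplitude k)
    (hk0 : k =ᶠ[𝓝 0] 0) (hd : 3 ≤ finrank ℝ V) :
    ∃ C : ℝ, 0 ≤ C ∧ ∀ (x : V) (s t : ℝ),
      ‖∫ u, secondDifference (fun s => oscInt k s u t) s * gaussTransform x u‖ ≤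
        C * (1 + |t|) ^ ((1 - finrank ℝ V : ℝ) / 2) * min ((1 + |t|) ^ 2 * s ^ 2) 1 := by
  obtain ⟨δ, hδ, k₀, hk₀, h_eq⟩ := hk.exists_isOffAxisAmplitude_eqOn hk0
  obtain ⟨A, hA, h_size⟩ := hk.exists_norm_integral_secondDifference_le hd
  obtain ⟨B, hB, h_diff⟩ := hk₀.exists_norm_integral_secondDifference_le V
  refine ⟨A + B + A / δ ^ 2, by positivity, fun x s t => ?_⟩
  have h_one : 1 ≤ (1 + |t|) ^ 2 := one_le_pow₀ (by linarith [abs_nonneg t])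
  have h_sq : ‖∫ u, secondDifference (fun s => oscInt k s u t) s * gaussTransform x u‖ ≤
      (B + A / δ ^ 2) * (1 + |t|) ^ ((1 - finrank ℝ V : ℝ) / 2) * ((1 + |t|) ^ 2 * s ^ 2) := by
    rcases lt_or_ge |s| δ with hs | hs
    · have h_osc : ∀ r, |r| < δ → ∀ u, oscInt k r u t = oscInt k₀ r u t := fun r hr u => by
        simp only [oscInt, h_eq r hr]
      simp only [secondDifference, h_osc s hs, h_osc 0 (abs_zero.trans_lt hδ),
        h_osc (-s) ((abs_neg s).trans_lt hs)]
      refine (h_diff x s t).trans ?_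
      gcongr
      exact le_add_of_nonneg_right (by positivity)
    · have h_ge : 1 ≤ (1 + |t|) ^ 2 * s ^ 2 / δ ^ 2 := by
        rw [one_le_div (by positivity), ← sq_abs s]
        nlinarith [pow_le_pow_left₀ hδ.le hs 2]
      calc _ ≤ A * (1 + |t|) ^ ((1 - finrank ℝ V : ℝ) / 2) := h_size x s t
        _ ≤ A * (1 + |t|) ^ ((1 - finrank ℝ V : ℝ) / 2) * ((1 + |t|) ^ 2 * s ^ 2 / δ ^ 2) :=
          le_mul_of_one_le_right (by positivity) h_ge
        _ = A / δ ^ 2 * (1 + |t|) ^ ((1 - finrank ℝ V : ℝ) / 2) * ((1 + |t|) ^ 2 * s ^ 2) := by ring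
        _ ≤ _ := by
          gcongr
          exact le_add_of_nonneg_left hB
  rw [mul_min_of_nonneg _ _ (by positivity), le_min_iff, mul_one]
  refine ⟨h_sq.trans ?_, (h_size x s t).trans ?_⟩
  · gcongr ?_ * _ * _
    linarith
  · gcongr
    linarith [show 0 ≤ A / δ ^ 2 by positivity]

end FrequencyIntegral

section ParabolaDensity

/-- The density of the pushforward of `f(τ) dτ`, `τ > 0`, under `τ ↦ τ² + s`. It vanishes for
`l ≤ s`, where the square root is zero and hence so is its inverse. -/
def parabolaDensity (s : ℝ) (f : ℝ → ℂ) (l : ℝ) : ℂ := ((2 * √(l - s))⁻¹ : ℝ) * f √(l - s)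

variable {s : ℝ} {f g : ℝ → ℂ}

lemma parabolaDensity_of_le {l : ℝ} (hl : l ≤ s) : parabolaDensity s f l = 0 := by
  simp [parabolaDensity, Real.sqrt_eq_zero_of_nonpos (sub_nonpos.2 hl)]

lemma two_mul_parabolaDensity_sq_add {τ : ℝ} (hτ : 0 < τ) :
    ((2 * τ : ℝ) : ℂ) * parabolaDensity s f (τ ^ 2 + s) = f τ := by
  rw [parabolaDensity, add_sub_cancel_right, Real.sqrt_sq hτ.le, ← mul_assoc, ← Complex.ofReal_mul,
    mul_inv_cancel₀ (by positivity), Complex.ofReal_one, one_mul]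

lemma integral_eq_integral_Ioi_comp_sq_add (hg : ∀ l ≤ s, g l = 0) :
    ∫ l, g l = ∫ τ in Set.Ioi (0 : ℝ), ((2 * τ : ℝ) : ℂ) * g (τ ^ 2 + s) := by
  rw [← integral_add_right_eq_self g s,
    ← setIntegral_eq_integral_of_forall_compl_eq_zero (s := Set.Ioi 0)
      (fun y hy => hg _ (by simpa using hy)),
    ← integral_comp_rpow_Ioi_of_pos (g := fun y => g (y + s)) (p := 2) two_pos]
  norm_num

lemma integrable_iff_integrableOn_Ioi_comp_sq_add (hg : ∀ l ≤ s, g l = 0) :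
    Integrable g ↔
      IntegrableOn (fun τ : ℝ => ((2 * τ : ℝ) : ℂ) * g (τ ^ 2 + s)) (Set.Ioi 0) := by
  have h_shift : Integrable g ↔ Integrable fun y => g (y + s) :=
    ⟨fun h => h.comp_add_right s, fun h => by simpa using h.comp_add_right (-s)⟩
  have h_support : IntegrableOn (fun y => g (y + s)) (Set.Ioi 0) ↔ Integrable fun y => g (y + s) :=
    integrableOn_iff_integrable_of_support_subset fun y hy => by
      by_contra h
      exact hy (hg _ (by simpa using h))
  rw [h_shift, ← h_support,
    ← integrableOn_Ioi_comp_rpow_iff (fun y => g (y + s)) (p := 2) two_ne_zero]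
  norm_num

lemma integrable_parabolaDensity (hf : IntegrableOn f (Set.Ioi 0)) :
    Integrable (parabolaDensity s f) := by
  rw [integrable_iff_integrableOn_Ioi_comp_sq_add fun l hl => parabolaDensity_of_le hl]
  exact hf.congr_fun (fun τ hτ => (two_mul_parabolaDensity_sq_add hτ).symm) measurableSet_Ioi

lemma fourier_parabolaDensity (u : ℝ) :
    𝓕 (parabolaDensity s f) u = ∫ τ in Set.Ioi 0, f τ * 𝐞 (-(u * (τ ^ 2 + s))) := by
  rw [Real.fourier_real_eq, integral_eq_integral_Ioi_comp_sq_add (s := s)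
    fun l hl => by rw [parabolaDensity_of_le hl, smul_zero]]
  refine setIntegral_congr_fun measurableSet_Ioi fun τ hτ => ?_
  simp only [Circle.smul_def, smul_eq_mul]
  rw [mul_left_comm, two_mul_parabolaDensity_sq_add hτ, mul_comm, mul_comm u]

lemma fourier_parabolaDensity_add_fourier_parabolaDensity_comp_neg (hf : Integrable f) (u : ℝ) :
    𝓕 (parabolaDensity s f) u + 𝓕 (parabolaDensity s fun τ => f (-τ)) u =
      ∫ τ, f τ * 𝐞 (-(u * (τ ^ 2 + s))) := by
  have h_int : Integrable fun τ => f τ * 𝐞 (-(u * (τ ^ 2 + s))) :=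
    hf.mul_bdd (c := 1) (Continuous.aestronglyMeasurable (by fun_prop))
      (ae_of_all _ fun _ => (Circle.norm_coe _).le)
  have h_neg := integral_comp_neg_Ioi (0 : ℝ) fun τ => f τ * 𝐞 (-(u * (τ ^ 2 + s)))
  simp only [neg_sq, neg_zero] at h_neg
  rw [fourier_parabolaDensity, fourier_parabolaDensity, h_neg, add_comm,
    intervalIntegral.integral_Iic_add_Ioi h_int.integrableOn h_int.integrableOn]

end ParabolaDensity

section Representation

variable {V : Type*} [NormedAddCommGroup V] [InnerProductSpace ℝ V] {k : ℝ × ℝ → ℂ} {s ε : ℝ}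

/-- The density in `l = |ξ|²` which the amplitude `k(s, ·)`, modulated by the time frequency `t`,
induces on the sheet of `hyperboloid V s` of time sign `ε = ±1`. -/
def sheetDensity (k : ℝ × ℝ → ℂ) (s t ε : ℝ) : ℝ → ℂ :=
  parabolaDensity s fun τ => k (s, ε * τ) * 𝐞 (t * (ε * τ))

lemma integrable_sheetDensity (hk : Integrable fun τ => k (s, τ)) (t : ℝ) (hε : ε ^ 2 = 1) :
    Integrable (sheetDensity k s t ε) := by
  have h : Integrable fun τ => k (s, τ) * 𝐞 (t * τ) :=
    hk.mul_bdd (c := 1) (Continuous.aestronglyMeasurable (by fun_prop))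
      (ae_of_all _ fun _ => (Circle.norm_coe _).le)
  exact integrable_parabolaDensity
    (h.comp_mul_left' (by rintro rfl; norm_num at hε)).integrableOn

lemma oscInt_eq_fourier_sheetDensity (hk : Integrable fun τ => k (s, τ)) (u t : ℝ) :
    oscInt k s u t = 𝓕 (sheetDensity k s t 1) u + 𝓕 (sheetDensity k s t (-1)) u := by
  have h : Integrable fun τ => k (s, τ) * 𝐞 (t * τ) :=
    hk.mul_bdd (c := 1) (Continuous.aestronglyMeasurable (by fun_prop))
      (ae_of_all _ fun _ => (Circle.norm_coe _).le)
  simp only [sheetDensity, one_mul, neg_one_mul]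
  rw [fourier_parabolaDensity_add_fourier_parabolaDensity_comp_neg h, oscInt]
  congr 1 with τ
  rw [mul_assoc, ← Circle.coe_mul, ← AddChar.map_add_eq_mul, sub_eq_add_neg]

lemma sheet_smul_eq_exp_mul_sheetDensity {A : WithLp 2 (V × ℝ) → ℂ}
    (hA : ∀ z ∈ hyperboloid V s, k (s, z.snd) = (2 * ‖z‖ * rexp (π * ‖z.fst‖ ^ 2) : ℝ) * A z)
    (hε : ε ^ 2 = 1) (w : WithLp 2 (V × ℝ)) {ξ : V} (hξ : s < ‖ξ‖ ^ 2) :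
    (√(2 * ‖ξ‖ ^ 2 - s) / √(‖ξ‖ ^ 2 - s)) • (A (sheetMap s ε ξ) * 𝐞 ⟪sheetMap s ε ξ, w⟫) =
      (rexp (-π * ‖ξ‖ ^ 2) : ℂ) * (sheetDensity k s w.snd ε (‖ξ‖ ^ 2) * 𝐞 ⟪w.fst, ξ⟫) := by
  have h_exp : rexp (-π * ‖ξ‖ ^ 2) * rexp (π * ‖ξ‖ ^ 2) = 1 := by
    rw [← Real.exp_add, neg_mul, neg_add_cancel, Real.exp_zero]
  have h_inner : ⟪sheetMap s ε ξ, w⟫ = w.snd * (ε * √(‖ξ‖ ^ 2 - s)) + ⟪w.fst, ξ⟫ := by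
    rw [WithLp.prod_inner_apply, add_comm]
    exact congrArg₂ (· + ·) rfl (real_inner_comm _ _)
  have h_k : k (s, ε * √(‖ξ‖ ^ 2 - s)) =
      (2 * √(2 * ‖ξ‖ ^ 2 - s) * rexp (π * ‖ξ‖ ^ 2) : ℝ) * A (sheetMap s ε ξ) := by
    simpa only [norm_sheetMap hε hξ, fst_sheetMap, snd_sheetMap] using
      hA _ (sheetMap_mem_hyperboloid hε hξ)
  have h_weight : √(2 * ‖ξ‖ ^ 2 - s) / √(‖ξ‖ ^ 2 - s) = rexp (-π * ‖ξ‖ ^ 2) *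
      ((2 * √(‖ξ‖ ^ 2 - s))⁻¹ * (2 * √(2 * ‖ξ‖ ^ 2 - s) * rexp (π * ‖ξ‖ ^ 2))) := by
    linear_combination (-(√(2 * ‖ξ‖ ^ 2 - s) / √(‖ξ‖ ^ 2 - s))) * h_exp
  rw [sheetDensity, parabolaDensity, h_k, h_inner, AddChar.map_add_eq_mul, Circle.coe_mul, h_weight,
    Complex.real_smul]
  push_cast
  ring

variable [FiniteDimensional ℝ V] [MeasurableSpace V] [BorelSpace V]

lemma integrable_fourier_sheetDensity_mul_gaussTransform (hd : 3 ≤ finrank ℝ V)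
    (hk : Integrable fun τ => k (s, τ)) (hε : ε ^ 2 = 1) (x : V) (t : ℝ) :
    Integrable fun u => 𝓕 (sheetDensity k s t ε) u * gaussTransform x u :=
  (integrable_gaussTransform x hd).bdd_mul
    (continuous_fourier (integrable_sheetDensity hk t hε)).aestronglyMeasurable
    (ae_of_all _ (norm_fourier_le _))

lemma integrable_oscInt_mul_gaussTransform (hd : 3 ≤ finrank ℝ V)
    (hk : Integrable fun τ => k (s, τ)) (x : V) (t : ℝ) :
    Integrable fun u => oscInt k s u t * gaussTransform x u := by
  simp only [oscInt_eq_fourier_sheetDensity hk, add_mul]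
  exact (integrable_fourier_sheetDensity_mul_gaussTransform hd hk (by norm_num) x t).add
    (integrable_fourier_sheetDensity_mul_gaussTransform hd hk (by norm_num) x t)

lemma integrable_exp_mul_sheetDensity (hd : 2 ≤ finrank ℝ V) (hk : Integrable fun τ => k (s, τ))
    (hε : ε ^ 2 = 1) (x : V) (t : ℝ) :
    Integrable fun ξ : V => (rexp (-π * ‖ξ‖ ^ 2) : ℂ) *
      (sheetDensity k s t ε (‖ξ‖ ^ 2) * 𝐞 ⟪x, ξ⟫) :=
  (integrable_gaussMeasure_iff _).1
    (integrable_comp_norm_sq_mul_fourierChar_gaussMeasure hd (integrable_sheetDensity hk t hε) x)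

lemma setIntegral_exp_mul_sheetDensity (hd : 3 ≤ finrank ℝ V) (hk : Integrable fun τ => k (s, τ))
    (hε : ε ^ 2 = 1) (x : V) (t : ℝ) :
    ∫ ξ : V in {ξ | s < ‖ξ‖ ^ 2}, (rexp (-π * ‖ξ‖ ^ 2) : ℂ) *
        (sheetDensity k s t ε (‖ξ‖ ^ 2) * 𝐞 ⟪x, ξ⟫) =
      ∫ u, 𝓕 (sheetDensity k s t ε) u * gaussTransform x u := by
  rw [← integral_comp_norm_sq_mul_fourierChar_gaussMeasure hd (integrable_sheetDensity hk t hε),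
    integral_gaussMeasure]
  refine setIntegral_eq_integral_of_forall_compl_eq_zero fun ξ hξ => ?_
  rw [sheetDensity, parabolaDensity_of_le (not_lt.1 hξ), zero_mul, mul_zero]

/-- The factor `e^{π|ξ|²}` compensates the Gaussian weight in `gaussTransform`. -/
theorem exists_integral_hyperboloid_eq_mul_integral_oscInt (hd : 3 ≤ finrank ℝ V) :
    ∃ c : ℝ≥0, ∀ (k : ℝ × ℝ → ℂ) (A : WithLp 2 (V × ℝ) → ℂ) (s : ℝ),
      (Integrable fun τ => k (s, τ)) →
      (∀ z ∈ hyperboloid V s, k (s, z.snd) = (2 * ‖z‖ * rexp (π * ‖z.fst‖ ^ 2) : ℝ) * A z) →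
      ∀ w : WithLp 2 (V × ℝ), ∫ z in hyperboloid V s, A z * 𝐞 ⟪z, w⟫ ∂μH[finrank ℝ V] =
        c * ∫ u, oscInt k s u w.snd * gaussTransform w.fst u := by
  have : Nontrivial V := Module.nontrivial_of_finrank_pos (R := ℝ) (by lia)
  obtain ⟨c, hc⟩ := exists_hausdorffMeasure_eq_smul_volume (V := V)
  refine ⟨c, fun k A s hk hA w => ?_⟩
  have h_sheet : ∀ ε : ℝ, ε ^ 2 = 1 → Set.EqOn
      (fun ξ => (√(2 * ‖ξ‖ ^ 2 - s) / √(‖ξ‖ ^ 2 - s)) •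
        (A (sheetMap s ε ξ) * 𝐞 ⟪sheetMap s ε ξ, w⟫))
      (fun ξ => (rexp (-π * ‖ξ‖ ^ 2) : ℂ) * (sheetDensity k s w.snd ε (‖ξ‖ ^ 2) * 𝐞 ⟪w.fst, ξ⟫))
      {ξ | s < ‖ξ‖ ^ 2} := fun ε hε ξ hξ => sheet_smul_eq_exp_mul_sheetDensity hA hε w hξ
  have h_integral : ∀ ε : ℝ, ε ^ 2 = 1 →
      ∫ ξ in {ξ | s < ‖ξ‖ ^ 2}, (√(2 * ‖ξ‖ ^ 2 - s) / √(‖ξ‖ ^ 2 - s)) •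
        (A (sheetMap s ε ξ) * 𝐞 ⟪sheetMap s ε ξ, w⟫) ∂μH[finrank ℝ V] =
      c * ∫ u, 𝓕 (sheetDensity k s w.snd ε) u * gaussTransform w.fst u := by
    intro ε hε
    rw [setIntegral_congr_fun (measurableSet_lt_norm_sq s) (h_sheet ε hε), hc,
      Measure.restrict_smul, integral_smul_nnreal_measure,
      setIntegral_exp_mul_sheetDensity hd hk hε]
    rfl
  rw [integral_hyperboloid fun ε hε => ?_, h_integral 1 (by norm_num),
    h_integral (-1) (by norm_num)]
  · simp only [oscInt_eq_fourier_sheetDensity hk, add_mul]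
    rw [integral_add
      (integrable_fourier_sheetDensity_mul_gaussTransform hd hk (by norm_num) w.fst w.snd)
      (integrable_fourier_sheetDensity_mul_gaussTransform hd hk (by norm_num) w.fst w.snd), mul_add]
  · rw [hc]
    exact ((integrable_exp_mul_sheetDensity (by lia) hk hε w.fst w.snd).smul_measure_nnreal
      |>.integrableOn).congr_fun (h_sheet ε hε).symm (measurableSet_lt_norm_sq s)

end Representation

section RadialAmplitude

lemma exists_contDiff_radialProfile {E : Type*} [NormedAddCommGroup E] [NormedSpace ℝ E]
    [Nontrivial E] {η : E → ℝ} {r R : ℝ} (hr : 0 < r) (hη : ContDiff ℝ (⊤ : ℕ∞) η)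
    (h_radial : ∀ z z' : E, ‖z‖ = ‖z'‖ → η z = η z')
    (h_support : ∀ z, η z ≠ 0 → r ≤ ‖z‖ ∧ ‖z‖ ≤ R) :
    ∃ Q : ℝ → ℝ, ContDiff ℝ (⊤ : ℕ∞) Q ∧ (∀ z, Q (‖z‖ ^ 2) = ‖z‖ * η z) ∧
      ∀ l, Q l ≠ 0 → r ^ 2 ≤ l ∧ l ≤ R ^ 2 := by
  obtain ⟨e, he⟩ := exists_norm_eq E zero_le_one
  have h_norm : ∀ l : ℝ, ‖√l • e‖ = √l := fun l => by
    rw [norm_smul, he, mul_one, Real.norm_of_nonneg (Real.sqrt_nonneg l)]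
  have h_Q : ∀ l, √l * η (√l • e) ≠ 0 → r ^ 2 ≤ l ∧ l ≤ R ^ 2 := by
    intro l hl
    obtain ⟨h_lower, h_upper⟩ := h_support _ (right_ne_zero_of_mul hl)
    rw [h_norm] at h_lower h_upper
    exact ⟨(Real.le_sqrt' hr).1 h_lower,
      (Real.sqrt_le_left (hr.le.trans (h_lower.trans h_upper))).1 h_upper⟩
  refine ⟨fun l => √l * η (√l • e), contDiff_iff_contDiffAt.2 fun l => ?_, fun z => ?_, h_Q⟩
  · rcases lt_or_ge l (r ^ 2) with hl | hl
    · refine (contDiffAt_const (c := 0)).congr_of_eventuallyEq ?_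
      filter_upwards [Iio_mem_nhds hl] with l' hl'
      by_contra h
      exact absurd (h_Q l' h).1 (not_le.2 hl')
    · have h_sqrt : ContDiffAt ℝ (⊤ : ℕ∞) (fun l : ℝ => √l) l :=
        Real.contDiffAt_sqrt ((pow_pos hr 2).trans_le hl).ne'
      exact h_sqrt.mul (hη.contDiffAt.comp l (h_sqrt.smul contDiffAt_const))
  · dsimp only
    rw [Real.sqrt_sq (norm_nonneg z),
      h_radial z (‖z‖ • e) (by rw [norm_smul, he, mul_one, norm_norm])]

/-- The amplitude of the level sets for the radial profile `Q(|z|²) = |z| η(z)`: on the level set of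
`s` one has `|z|² = 2τ² + s` and `|ξ|² = τ² + s`. The exponential compensates the weight of
`gaussMeasure`; the cutoff `χ` makes the support compact and only acts where `|ξ|²` would exceed
`|z|²` or be negative. -/
def radialAmplitude (Q : ℝ → ℝ) (χ : ContDiffBump (0 : ℝ)) (p : ℝ × ℝ) : ℂ :=
  (2 * Q (2 * p.2 ^ 2 + p.1) * (χ (p.2 ^ 2 + p.1) * rexp (π * (p.2 ^ 2 + p.1))) : ℝ)

variable {Q : ℝ → ℝ} {a b : ℝ} {χ : ContDiffBump (0 : ℝ)}

lemma radialAmplitude_eq_zero {p : ℝ × ℝ} (h : Q (2 * p.2 ^ 2 + p.1) = 0) :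
    radialAmplitude Q χ p = 0 := by
  simp [radialAmplitude, h]

lemma isAmplitude_radialAmplitude (hQ : ContDiff ℝ (⊤ : ℕ∞) Q) (h_upper : ∀ l, Q l ≠ 0 → l ≤ b) :
    IsAmplitude (radialAmplitude Q χ) where
  contDiff := by
    have h_χ : ContDiff ℝ (⊤ : ℕ∞) fun p : ℝ × ℝ => χ (p.2 ^ 2 + p.1) :=
      χ.contDiff.comp (by fun_prop)
    have h_Q : ContDiff ℝ (⊤ : ℕ∞) fun p : ℝ × ℝ => Q (2 * p.2 ^ 2 + p.1) := hQ.comp (by fun_prop)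
    exact Complex.ofRealCLM.contDiff.comp
      ((contDiff_const.mul h_Q).mul (h_χ.mul (by fun_prop)))
  hasCompactSupport := by
    refine HasCompactSupport.intro (isCompact_closedBall 0 (|b| + 2 * χ.rOut + 1)) fun p => ?_
    contrapose!
    intro h
    have h_le : 2 * p.2 ^ 2 + p.1 ≤ b := h_upper _ fun h0 => h (radialAmplitude_eq_zero h0)
    have h_abs : |p.2 ^ 2 + p.1| < χ.rOut := by
      by_contra! h_le
      exact h (by simp [radialAmplitude, χ.zero_of_le_dist (x := p.2 ^ 2 + p.1) (by simpa)])
    have hb := le_abs_self b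
    have hb0 := abs_nonneg b
    have hχ := χ.rOut_pos
    rw [mem_closedBall_zero_iff, Prod.norm_def]
    refine max_le (abs_le.2 ⟨?_, ?_⟩) (abs_le_of_sq_le_sq ?_ (by positivity))
    all_goals nlinarith [sq_nonneg p.2, abs_lt.1 h_abs]

lemma radialAmplitude_eventuallyEq_zero (ha : 0 < a) (h_lower : ∀ l, Q l ≠ 0 → a ≤ l) :
    radialAmplitude Q χ =ᶠ[𝓝 0] 0 := by
  have h_cont : Continuous fun p : ℝ × ℝ => 2 * p.2 ^ 2 + p.1 := by fun_prop
  filter_upwards [h_cont.continuousAt.eventually_lt_const (u := a) (by simpa using ha)] with p hp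
  exact radialAmplitude_eq_zero (not_imp_comm.1 (h_lower _) (not_le.2 hp))

lemma radialAmplitude_of_nonneg (h_upper : ∀ l, Q l ≠ 0 → l ≤ χ.rIn) {s τ : ℝ}
    (h : 0 ≤ τ ^ 2 + s) : radialAmplitude Q χ (s, τ) =
      (2 * Q (2 * τ ^ 2 + s) * rexp (π * (τ ^ 2 + s)) : ℝ) := by
  by_cases hQ : Q (2 * τ ^ 2 + s) = 0
  · rw [radialAmplitude_eq_zero hQ, hQ, mul_zero, zero_mul, Complex.ofReal_zero]
  · have h_mem : τ ^ 2 + s ∈ Metric.closedBall 0 χ.rIn := by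
      rw [mem_closedBall_zero_iff, Real.norm_of_nonneg h]
      linarith [h_upper _ hQ, sq_nonneg τ]
    rw [radialAmplitude, χ.one_of_mem_closedBall h_mem, one_mul]

lemma exists_isAmplitude_eqOn_hyperboloid {V : Type*} [NormedAddCommGroup V]
    {A : WithLp 2 (V × ℝ) → ℝ} (ha : 0 < a) (hQ : ContDiff ℝ (⊤ : ℕ∞) Q)
    (h_support : ∀ l, Q l ≠ 0 → a ≤ l ∧ l ≤ b) (hA : ∀ z, Q (‖z‖ ^ 2) = ‖z‖ * A z) :
    ∃ k : ℝ × ℝ → ℂ, IsAmplitude k ∧ k =ᶠ[𝓝 0] 0 ∧ ∀ s, ∀ z ∈ hyperboloid V s,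
      k (s, z.snd) = (2 * ‖z‖ * rexp (π * ‖z.fst‖ ^ 2) : ℝ) * A z := by
  let χ : ContDiffBump (0 : ℝ) := ⟨|b| + 1, |b| + 2, by positivity, by linarith⟩
  have h_upper : ∀ l, Q l ≠ 0 → l ≤ χ.rIn := fun l hl =>
    (h_support l hl).2.trans ((le_abs_self b).trans (le_add_of_nonneg_right zero_le_one))
  refine ⟨radialAmplitude Q χ, isAmplitude_radialAmplitude hQ h_upper,
    radialAmplitude_eventuallyEq_zero ha fun l hl => (h_support l hl).1, fun s z hz => ?_⟩
  have h_fst : z.snd ^ 2 + s = ‖z.fst‖ ^ 2 := by linarith [hz.1]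
  have h_norm : 2 * z.snd ^ 2 + s = ‖z‖ ^ 2 := by
    linarith [norm_sq_of_mem_hyperboloid hz]
  rw [radialAmplitude_of_nonneg h_upper (by rw [h_fst]; positivity), h_fst, h_norm, hA]
  push_cast
  ring

end RadialAmplitude

lemma integral_secondDifference {α : Type*} [MeasurableSpace α] {μ : Measure α} {F : ℝ → α → ℂ}
    (hF : ∀ s, Integrable (F s) μ) (s : ℝ) :
    ∫ u, secondDifference (fun s => F s u) s ∂μ = secondDifference (fun s => ∫ u, F s u ∂μ) s := by
  have h_sub : Integrable (fun u => F s u - 2 * F 0 u) μ := (hF s).sub ((hF 0).const_mul 2)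
  simp only [secondDifference]
  rw [integral_add h_sub (hF (-s)), integral_sub (hF s) ((hF 0).const_mul 2), integral_const_mul]

lemma IsAmplitude.exists_norm_secondDifference_integral_oscInt_le {V : Type*}
    [NormedAddCommGroup V] [InnerProductSpace ℝ V] [FiniteDimensional ℝ V] [MeasurableSpace V]
    [BorelSpace V] {k : ℝ × ℝ → ℂ} (hk : IsAmplitude k) (hk0 : k =ᶠ[𝓝 0] 0)
    (hd : 3 ≤ finrank ℝ V) : ∃ C : ℝ, 0 ≤ C ∧ ∀ (x : V) (s t : ℝ),
      ‖secondDifference (fun s => ∫ u, oscInt k s u t * gaussTransform x u) s‖ ≤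
        C * (1 + |t|) ^ ((1 - finrank ℝ V : ℝ) / 2) * min ((1 + |t|) ^ 2 * s ^ 2) 1 := by
  obtain ⟨C, hC0, hC⟩ := hk.exists_norm_integral_secondDifference_le_mul_min hk0 hd
  refine ⟨C, hC0, fun x s t => le_of_eq_of_le ?_ (hC x s t)⟩
  rw [← integral_secondDifference fun s =>
    integrable_oscInt_mul_gaussTransform hd (hk.integrable_slice s) x t]
  congr 2 with u
  simp only [secondDifference]
  ring

theorem statement9_general {m : ℕ} (hm : 3 ≤ m) {η : Spacetime m → ℝ} {r R : ℝ} (hr : 0 < r)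
    (hηsm : ContDiff ℝ (⊤ : ℕ∞) η) (hηrad : ∀ z z' : Spacetime m, ‖z‖ = ‖z'‖ → η z = η z')
    (hηsupp : ∀ z : Spacetime m, η z ≠ 0 → r ≤ ‖z‖ ∧ ‖z‖ ≤ R) :
    ∃ C : ℝ, 0 < C ∧ ∀ (w : Spacetime m) (s : ℝ),
      ‖sigmaCheck η s w - 2 * sigmaCheck η 0 w + sigmaCheck η (-s) w‖
        ≤ C * (1 + |timeCoord w|) ^ ((1 - m : ℝ) / 2) *
            min ((1 + |timeCoord w|) ^ 2 * s ^ 2) 1 := by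
  have hd : 3 ≤ finrank ℝ (EuclideanSpace ℝ (Fin m)) := by simpa using hm
  obtain ⟨Q, hQ, h_profile, h_support⟩ := exists_contDiff_radialProfile hr hηsm hηrad hηsupp
  obtain ⟨k, hk, hk0, h_hyperboloid⟩ := exists_isAmplitude_eqOn_hyperboloid
    (A := fun z => η ((splitTime m).symm z)) (pow_pos hr 2) hQ h_support
    fun z => by rw [← LinearIsometryEquiv.norm_map (splitTime m).symm z, h_profile]
  obtain ⟨c, hc⟩ := exists_integral_hyperboloid_eq_mul_integral_oscInt hd
  obtain ⟨C, hC0, hC⟩ := hk.exists_norm_secondDifference_integral_oscInt_le hk0 hd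
  refine ⟨c * C + 1, by positivity, fun w s => ?_⟩
  have h_sigma : ∀ s, sigmaCheck η s w = c * ∫ u, oscInt k s u (timeCoord w) *
      gaussTransform (splitTime m w).fst u := fun s => by
    rw [sigmaCheck_eq_integral_hyperboloid, ← snd_splitTime,
      ← hc k _ s (hk.integrable_slice s) (h_hyperboloid s), finrank_euclideanSpace_fin]
  have h_diff : sigmaCheck η s w - 2 * sigmaCheck η 0 w + sigmaCheck η (-s) w =
      c * secondDifference (fun s => ∫ u, oscInt k s u (timeCoord w) *
        gaussTransform (splitTime m w).fst u) s := by
    simp only [h_sigma, secondDifference]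
    ring
  have h_bound := hC (splitTime m w).fst s (timeCoord w)
  rw [finrank_euclideanSpace_fin, mul_assoc] at h_bound
  rw [h_diff, norm_mul, Complex.norm_real, NNReal.norm_eq, mul_assoc, add_mul, mul_assoc]
  exact (mul_le_mul_of_nonneg_left h_bound c.2).trans (le_add_of_nonneg_right (by positivity))

/-- For `n ≥ 5` and any smooth radial bump function `η` supported on
the annulus `{1/4 ≤ ‖z‖ ≤ 5/4}`, there is a constant `C > 0` (depending only on `n`
and `η`) such that for all `(x,t) ∈ ℝ^{n-1} × ℝ` and all `s ∈ (-1/10, 1/10)`,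
`|(σ_s^{(0)})^∨(x,t) - 2(σ_0^{(0)})^∨(x,t) + (σ_{-s}^{(0)})^∨(x,t)|
  ≤ C (1+|t|)^{(2-n)/2} · min((1+|t|)² s², 1)`. -/
theorem statement9 (n m : ℕ) (hn : 5 ≤ n) (hnm : m + 1 = n)
    (η : Spacetime m → ℝ)
    (hηsm : ContDiff ℝ (⊤ : ℕ∞) η)
    (hηrad : ∀ z z' : Spacetime m, ‖z‖ = ‖z'‖ → η z = η z')
    (hηsupp : ∀ z : Spacetime m, η z ≠ 0 → 1 / 4 ≤ ‖z‖ ∧ ‖z‖ ≤ 5 / 4) :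
    ∃ C : ℝ, 0 < C ∧ ∀ (w : Spacetime m) (s : ℝ), s ∈ Set.Ioo (-(1 / 10) : ℝ) (1 / 10) →
      ‖sigmaCheck η s w - 2 * sigmaCheck η 0 w + sigmaCheck η (-s) w‖
        ≤ C * (1 + |timeCoord w|) ^ (((2 : ℝ) - n) / 2) *
            min ((1 + |timeCoord w|) ^ 2 * s ^ 2) 1 := by
  obtain ⟨C, hC0, hC⟩ := statement9_general (by lia) (by norm_num) hηsm hηrad hηsupp
  have h_exponent : (2 : ℝ) - n = 1 - m := by rw [← hnm]; push_cast; ring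
  exact ⟨C, hC0, fun w s _ => h_exponent ▸ hC w s⟩
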